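/- Let q > 1 be a prime power and let f₁, …, f_n be even, algebraic-valued, Dirichlet-type periodic functions with period q. Then L'(0,f₁), …, L'(0,f_n) are linearly independent over the field of algebraic numbers if and only if the functions f₁, …, f_n are linearly independent over the field of algebraic numbers. -/

import Mathlib

/-!
By the functional equation of the Hurwitz zeta function, an even function `Φ` on `ZMod q` with
`Φ 0 = 0` has `L'(0, Φ) = -½ ∑ⱼ Φ(j) log |1 - ζʲ|`, where `ζ = exp (2πi / q)`. By linearity it
suffices to show that an even, algebraic-valued `Φ` supported on units is zero as soon as this sum
vanishes.

The rational relations among the numbers `log |1 - ζᵃ|` with `a` a unit are stable under Galois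
conjugation, so their Fourier transform is killed by the values `L'(0, χ)` for even characters `χ`.
These are all nonzero when `q` is a prime power, because the Euler factors by which `χ` differs from
its primitive character do not vanish at `0` if `χ ≠ 1`, and vanish to first order if `χ = 1`.
Hence the only rational relations are those expressing `log |1 - ζ⁻ᵃ| = log |1 - ζᵃ|`. Baker's
theorem carries this over from rational to algebraic coefficients.

Baker's theorem is proved by Gelfond's method in its simplest form. Siegel's lemma gives a small
nonzero integral vector such that the associated exponential sum and many of its derivatives vanish
at a few integers. Schwarz's lemma and the Liouville inequality extend these zeros to more and more
integers, at the cost of the same number of derivatives each time, until there are more equations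
than a confluent Vandermonde matrix allows.
-/

open scoped Real

/-- The value at `s = 0` of the derivative of the analytic continuation of
`L(s,f) = ∑_{n ≥ 1} f(n)/n^s`, given via `L(s,f) = q^{-s} ∑_{a=1}^q f(a) ζ(s, a/q)`
with `ζ` the Hurwitz zeta function. -/
noncomputable def Lderiv0 (q : ℕ) (f : ℤ → ℂ) : ℂ :=
  deriv (fun s : ℂ =>
    (q : ℂ) ^ (-s) *
      ∑ a ∈ Finset.Icc 1 q, f a * HurwitzZeta.hurwitzZeta (((a : ℝ) / q : ℝ) : UnitAddCircle) s) 0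

/-! ### Entire functions with many zeros -/

section Schwarz

variable {f : ℂ → ℂ} {S : ℕ}

lemma exists_eq_sub_pow_mul_of_le_analyticOrderAt (hf : Differentiable ℂ f) {a : ℂ}
    (h : S ≤ analyticOrderAt f a) :
    ∃ g : ℂ → ℂ, Differentiable ℂ g ∧ ∀ z, f z = (z - a) ^ S * g z := by
  induction S generalizing f with
  | zero => exact ⟨f, hf, by simp⟩
  | succ S ih =>
    have hfa : f a = 0 := (hf.analyticAt a).analyticOrderAt_ne_zero.1 fun h0 => by simp [h0] at h
    have hfac : ∀ z, f z = (z - a) * dslope f a z := fun z =>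
      (sub_smul_dslope_of_zero hfa z).symm
    have hd : Differentiable ℂ (dslope f a) := by
      rw [← differentiableOn_univ] at hf ⊢
      exact (Complex.differentiableOn_dslope Filter.univ_mem).2 hf
    have horder : analyticOrderAt f a = 1 + analyticOrderAt (dslope f a) a := by
      have hmul : f = (fun z => z - a) * dslope f a := funext hfac
      nth_rw 1 [hmul]
      rw [analyticOrderAt_mul (by fun_prop) (hd.analyticAt a), analyticOrderAt_id_sub_const_self]
    rw [horder, Nat.cast_succ, add_comm,
      ENat.add_le_add_iff_left (by simp : (1 : ℕ∞) ≠ ⊤)] at h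
    obtain ⟨g, hg, hdg⟩ := ih hd h
    exact ⟨g, hg, fun z => by rw [hfac, hdg, pow_succ]; ring⟩

lemma exists_eq_prod_sub_pow_mul_of_le_analyticOrderAt (hf : Differentiable ℂ f) (T : Finset ℂ)
    (h : ∀ a ∈ T, S ≤ analyticOrderAt f a) :
    ∃ g : ℂ → ℂ, Differentiable ℂ g ∧ ∀ z, f z = (∏ a ∈ T, (z - a) ^ S) * g z := by
  classical
  induction T using Finset.induction_on with
  | empty => exact ⟨f, hf, by simp⟩
  | insert a T haT ih =>
    obtain ⟨g, hg, hfg⟩ := ih fun b hb => h b (Finset.mem_insert_of_mem hb)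
    have hP : Differentiable ℂ fun z : ℂ => ∏ b ∈ T, (z - b) ^ S := by fun_prop
    have hP0 : analyticOrderAt (fun z : ℂ => ∏ b ∈ T, (z - b) ^ S) a = 0 := by
      rw [(hP.analyticAt a).analyticOrderAt_eq_zero, Finset.prod_ne_zero_iff]
      exact fun b hb => pow_ne_zero _ (sub_ne_zero.2 fun hab => haT (hab ▸ hb))
    have hga : S ≤ analyticOrderAt g a := by
      have hmul : f = (fun z : ℂ => ∏ b ∈ T, (z - b) ^ S) * g := funext hfg
      have hfa := h a (Finset.mem_insert_self a T)
      rwa [hmul, analyticOrderAt_mul (hP.analyticAt a) (hg.analyticAt a), hP0, zero_add] at hfa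
    obtain ⟨k, hk, hgk⟩ := exists_eq_sub_pow_mul_of_le_analyticOrderAt hg hga
    exact ⟨k, hk, fun z => by rw [hfg, hgk, Finset.prod_insert haT]; ring⟩

/- Compare `f` with `2 ^ (#T * S) * P w * f / P`, where `P z = ∏ a ∈ T, (z - a) ^ S`: on the circle
the factor `2 ^ (#T * S) * P w / P` has norm at most `1`. -/
lemma norm_mul_two_pow_le_of_iteratedDeriv_eq_zero (hf : Differentiable ℂ f) {T : Finset ℂ}
    (hzero : ∀ a ∈ T, ∀ s < S, iteratedDeriv s f a = 0) {R B : ℝ} {w : ℂ} (hR : 0 < R)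
    (hB : ∀ z, ‖z‖ = R → ‖f z‖ ≤ B) (hw : ‖w‖ ≤ R) (hT : ∀ a ∈ T, ‖a‖ + 2 * ‖w - a‖ ≤ R) :
    ‖f w‖ * 2 ^ (T.card * S) ≤ B := by
  obtain ⟨g, hg, hfg⟩ := exists_eq_prod_sub_pow_mul_of_le_analyticOrderAt hf T fun a ha =>
    (natCast_le_analyticOrderAt_iff_iteratedDeriv_eq_zero (hf.analyticAt a)).2 (hzero a ha)
  have hprod : ∀ z, ‖z‖ = R →
      2 ^ (T.card * S) * ‖∏ a ∈ T, (w - a) ^ S‖ ≤ ‖∏ a ∈ T, (z - a) ^ S‖ := fun z hz => by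
    rw [mul_comm T.card, pow_mul, ← Finset.prod_const, norm_prod, norm_prod,
      ← Finset.prod_mul_distrib]
    refine Finset.prod_le_prod (fun a _ => by positivity) fun a ha => ?_
    rw [norm_pow, norm_pow, ← mul_pow]
    gcongr
    linarith [hT a ha, norm_sub_norm_le z a]
  have hbound : ‖2 ^ (T.card * S) * (∏ a ∈ T, (w - a) ^ S) * g w‖ ≤ B := by
    refine Complex.norm_le_of_forall_mem_frontier_norm_le (U := Metric.ball 0 R)
      Metric.isBounded_ball
      (hg.const_mul (2 ^ (T.card * S) * ∏ a ∈ T, (w - a) ^ S)).diffContOnCl (fun z hz => ?_)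
      (by simpa [closure_ball (0 : ℂ) hR.ne'] using hw)
    have hzR : ‖z‖ = R := by simpa [frontier_ball (0 : ℂ) hR.ne'] using hz
    calc ‖2 ^ (T.card * S) * (∏ a ∈ T, (w - a) ^ S) * g z‖
        = 2 ^ (T.card * S) * ‖∏ a ∈ T, (w - a) ^ S‖ * ‖g z‖ := by simp
      _ ≤ ‖∏ a ∈ T, (z - a) ^ S‖ * ‖g z‖ := by gcongr; exact hprod z hzR
      _ = ‖f z‖ := by rw [hfg, norm_mul]
      _ ≤ B := hB z hzR
  calc ‖f w‖ * 2 ^ (T.card * S) = ‖2 ^ (T.card * S) * (∏ a ∈ T, (w - a) ^ S) * g w‖ := by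
        rw [mul_assoc, ← hfg, norm_mul, mul_comm]; simp
    _ ≤ B := hbound

end Schwarz

/-! ### Siegel's lemma and the Liouville inequality -/

section Arithmetic

open NumberField

universe u v

variable (K : Type*) [Field K] [NumberField K]

/- Mathlib's Siegel lemma involves a private constant; when there are at least twice as many
unknowns as equations it can be replaced by a bound that is linear in all the data. -/
lemma exists_forall_exists_house_le_of_mulVec_eq_zero : ∃ C : ℝ, 1 ≤ C ∧
    ∀ {α : Type u} {β : Type v} [Fintype α] [Fintype β] (a : Matrix α β (𝓞 K)) {A : ℝ}, 1 ≤ A →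
      a ≠ 0 → 2 * Fintype.card α ≤ Fintype.card β → (∀ i j, house (a i j : K) ≤ A) →
      ∃ ξ : β → 𝓞 K, ξ ≠ 0 ∧ a.mulVec ξ = 0 ∧ ∀ l, house (ξ l : K) ≤ C * Fintype.card β * A := by
  classical
  have hsiegel : ∃ c : ℝ, ∀ {α : Type u} {β : Type v} [Fintype α] [Fintype β]
      (a : Matrix α β (𝓞 K)) {A : ℝ},
      a ≠ 0 → 0 < Fintype.card α → Fintype.card α < Fintype.card β →
      (∀ i j, house (a i j : K) ≤ A) →
      ∃ ξ : β → 𝓞 K, ξ ≠ 0 ∧ a.mulVec ξ = 0 ∧ ∀ l, house (ξ l : K) ≤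
        c * (c * Fintype.card β * A) ^
          ((Fintype.card α : ℝ) / (Fintype.card β - Fintype.card α)) :=
    ⟨_, fun a _ ha hα hαβ hA =>
      NumberField.house.exists_ne_zero_int_vec_house_le K a ha hα hαβ rfl hA rfl⟩
  obtain ⟨c, hc⟩ := hsiegel
  have hD : 1 ≤ max 1 |c| := le_max_left _ _
  refine ⟨max 1 |c| ^ 2, one_le_pow₀ hD, fun {α β} _ _ a {A} hA ha hcard hhouse => ?_⟩
  obtain ⟨i, -⟩ := Function.ne_iff.1 ha
  have hα : 0 < Fintype.card α := Fintype.card_pos_iff.2 ⟨i⟩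
  obtain ⟨ξ, hξ, haξ, hbound⟩ := hc a ha hα (by omega) hhouse
  refine ⟨ξ, hξ, haξ, fun l => (hbound l).trans ?_⟩
  have hcard' : 2 * (Fintype.card α : ℝ) ≤ Fintype.card β := by exact_mod_cast hcard
  have hα' : (1 : ℝ) ≤ Fintype.card α := by exact_mod_cast hα
  set e : ℝ := (Fintype.card α : ℝ) / (Fintype.card β - Fintype.card α)
  have he0 : 0 ≤ e := div_nonneg (by linarith) (by linarith)
  have he1 : e ≤ 1 := (div_le_one (by linarith)).2 (by linarith)
  have hbase : 1 ≤ max 1 |c| * Fintype.card β * A :=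
    one_le_mul_of_one_le_of_one_le (one_le_mul_of_one_le_of_one_le hD (by linarith)) hA
  calc c * (c * Fintype.card β * A) ^ e
      ≤ |c| * |c * Fintype.card β * A| ^ e := by
        refine (le_abs_self _).trans ?_
        rw [abs_mul]
        gcongr
        exact Real.abs_rpow_le_abs_rpow _ _
    _ = |c| * (|c| * Fintype.card β * A) ^ e := by
        rw [abs_mul, abs_mul, Nat.abs_cast, abs_of_pos (zero_lt_one.trans_le hA)]
    _ ≤ max 1 |c| * (max 1 |c| * Fintype.card β * A) ^ e := by
        gcongr <;> exact le_max_right _ _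
    _ ≤ max 1 |c| * (max 1 |c| * Fintype.card β * A) ^ (1 : ℝ) := by
        gcongr
    _ = max 1 |c| ^ 2 * Fintype.card β * A := by rw [Real.rpow_one]; ring

variable {K}

lemma one_le_norm_mul_house_pow (σ : K →+* ℂ) {x : 𝓞 K} (hx : x ≠ 0) :
    1 ≤ ‖σ x‖ * house (x : K) ^ (Module.finrank ℚ K - 1) := by
  have hnorm : (1 : ℝ) ≤ |(Algebra.norm ℤ x : ℝ)| := by
    exact_mod_cast Int.one_le_abs (Algebra.norm_ne_zero_iff.2 hx)
  refine le_trans ?_ (norm_norm_le_norm_mul_house_pow (x : K) σ)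
  rw [← Algebra.coe_norm_int x]
  simpa [← Rat.norm_cast_real] using hnorm

lemma house_prod_le_prod_house {ι : Type*} (s : Finset ι) (f : ι → K) :
    house (∏ i ∈ s, f i) ≤ ∏ i ∈ s, house (f i) := by
  simpa [house, map_prod] using Finset.norm_prod_le s fun i => canonicalEmbedding K (f i)

end Arithmetic

/-! ### Extrapolation of auxiliary functions -/

section ExpSum

variable {I : Type*} [Fintype I]

/-- The exponential sum `z ↦ ∑ k, c k * exp (w k * z)`, the shape of the auxiliary functions in
Baker's method. -/
noncomputable def expSum (c w : I → ℂ) (z : ℂ) : ℂ := ∑ k, c k * Complex.exp (w k * z)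

variable {c w : I → ℂ}

lemma differentiable_expSum : Differentiable ℂ (expSum c w) := by
  unfold expSum; fun_prop

lemma iteratedDeriv_expSum (s : ℕ) :
    iteratedDeriv s (expSum c w) = expSum (fun k => c k * w k ^ s) w := by
  ext z
  unfold expSum
  rw [iteratedDeriv_fun_sum fun k _ => by fun_prop]
  simp only [iteratedDeriv_const_mul_field, iteratedDeriv_cexp_const_mul, mul_assoc]

lemma expSum_natCast {u : I → ℂ} (hu : ∀ k, Complex.exp (w k) = u k) (l : ℕ) :
    expSum c w l = ∑ k, c k * u k ^ l := by
  simp only [expSum, mul_comm (w _), Complex.exp_nat_mul, hu]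

lemma norm_expSum_le {z : ℂ} {D : ℝ} (hD : ∀ k, ‖w k‖ * ‖z‖ ≤ D) :
    ‖expSum c w z‖ ≤ (∑ k, ‖c k‖) * Real.exp D := by
  rw [Finset.sum_mul]
  refine norm_sum_le_of_le _ fun k _ => ?_
  rw [norm_mul, Complex.norm_exp]
  gcongr
  exact (Complex.re_le_norm _).trans ((norm_mul _ _).trans_le (hD k))

end ExpSum

section Auxiliary

open NumberField

variable {I ι : Type*} [Fintype I] [Fintype ι]

/-- The vector `p` of coefficients is auxiliary for the points `u k` and the directions `b k`, to
order `T` and up to height `X`: the moments `∑ k, p k * (∏ r, b k r ^ m r) * u k ^ l` vanish for all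
exponents `m r < T` and `l < X`. If `u k = exp (∑ r, b k r * lam r)`, these moments are the values
at `z = l` of the mixed partial derivatives of the function
`∑ k, p k * exp (∑ r, b k r * z r)` along the line `z r = z * lam r`. -/
def IsAuxiliary {R : Type*} [CommRing R] (p u : I → R) (b : I → ι → R) (T X : ℕ) : Prop :=
  ∀ m : ι → ℕ, (∀ r, m r < T) → ∀ l < X, ∑ k, p k * (∏ r, b k r ^ m r) * u k ^ l = 0

namespace IsAuxiliary

variable {R : Type*} [CommRing R] {p u : I → R} {b : I → ι → R} {T S X : ℕ}

lemma map {R' : Type*} [CommRing R'] (h : IsAuxiliary p u b T X) (σ : R →+* R') :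
    IsAuxiliary (fun k => σ (p k)) (fun k => σ (u k)) (fun k r => σ (b k r)) T X :=
  fun m hm l hl => by simpa using congrArg σ (h m hm l hl)

lemma sum_mul_prod_pow_mul_pow_eq_zero (h : IsAuxiliary p u b T X) (lam : ι → R) {l : ℕ}
    (hl : l < X) {s : ℕ} {m : ι → ℕ} (hm : ∀ r, m r + s < T) :
    ∑ k, p k * (∏ r, b k r ^ m r) * (∑ r, b k r * lam r) ^ s * u k ^ l = 0 := by
  classical
  induction s generalizing m with
  | zero => simpa using h m (by simpa using hm) l hl
  | succ s ih =>
    have hprod : ∀ k r, ∏ r', b k r' ^ (m + Pi.single r 1 : ι → ℕ) r' =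
        (∏ r', b k r' ^ m r') * b k r := fun k r => by
      simp only [Pi.add_apply, pow_add, Finset.prod_mul_distrib]
      simp [Pi.single_apply]
    calc ∑ k, p k * (∏ r, b k r ^ m r) * (∑ r, b k r * lam r) ^ (s + 1) * u k ^ l
        = ∑ r, lam r * ∑ k, p k * (∏ r', b k r' ^ (m + Pi.single r 1 : ι → ℕ) r') *
            (∑ r, b k r * lam r) ^ s * u k ^ l := by
          simp only [hprod, Finset.mul_sum]
          rw [Finset.sum_comm]
          refine Finset.sum_congr rfl fun k _ => ?_
          rw [pow_succ, ← mul_assoc, Finset.mul_sum, Finset.sum_mul]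
          exact Finset.sum_congr rfl fun r _ => by ring
      _ = 0 := Finset.sum_eq_zero fun r _ => by
          rw [ih fun r' => ?_, mul_zero]
          have := hm r'
          by_cases hr : r' = r
          · subst hr; simp; omega
          · simp [hr]; omega

lemma iteratedDeriv_expSum_eq_zero {p u : I → ℂ} {b : I → ι → ℂ} {lam : ι → ℂ}
    (h : IsAuxiliary p u b (T + S) X) (hu : ∀ k, Complex.exp (∑ r, b k r * lam r) = u k)
    {m : ι → ℕ} (hm : ∀ r, m r < T) {l s : ℕ} (hl : l < X) (hs : s < S) :
    iteratedDeriv s (expSum (fun k => p k * ∏ r, b k r ^ m r) fun k => ∑ r, b k r * lam r) l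
      = 0 := by
  rw [iteratedDeriv_expSum, expSum_natCast hu]
  exact h.sum_mul_prod_pow_mul_pow_eq_zero lam hl fun r => by have := hm r; omega

lemma norm_expSum_mul_two_pow_le {p u : I → ℂ} {b : I → ι → ℂ} {lam : ι → ℂ}
    (h : IsAuxiliary p u b (T + S) X) (hu : ∀ k, Complex.exp (∑ r, b k r * lam r) = u k)
    {m : ι → ℕ} (hm : ∀ r, m r < T) {X' l : ℕ} (hX : X ≤ X') (hl : l < X') {E : ℝ}
    (hE : ∀ k, ‖∑ r, b k r * lam r‖ * (3 * X') ≤ E) :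
    ‖expSum (fun k => p k * ∏ r, b k r ^ m r) (fun k => ∑ r, b k r * lam r) l‖ * 2 ^ (X * S) ≤
      (∑ k, ‖p k * ∏ r, b k r ^ m r‖) * Real.exp E := by
  have hl' : (l : ℝ) < X' := by exact_mod_cast hl
  have hT : ∀ a ∈ (Finset.range X).map (Nat.castEmbedding (R := ℂ)),
      ‖a‖ + 2 * ‖(l : ℂ) - a‖ ≤ 3 * X' := fun a ha => by
    obtain ⟨l', hl'X, rfl⟩ := Finset.mem_map.1 ha
    have hl'X' : (l' : ℝ) ≤ X' := by exact_mod_cast (Finset.mem_range.1 hl'X).le.trans hX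
    have hdist : ‖(l : ℂ) - l'‖ ≤ X' := by
      rw [← Complex.ofReal_natCast, ← Complex.ofReal_natCast, ← Complex.ofReal_sub,
        Complex.norm_real, Real.norm_eq_abs, abs_le]
      constructor <;> linarith [l.cast_nonneg (α := ℝ), l'.cast_nonneg (α := ℝ)]
    simp only [Nat.castEmbedding_apply, Complex.norm_natCast]
    linarith
  have hschwarz := norm_mul_two_pow_le_of_iteratedDeriv_eq_zero differentiable_expSum (S := S)
    (by simpa only [Finset.forall_mem_map, Finset.mem_range, Nat.castEmbedding_apply]
      using fun l' hl' s hs => h.iteratedDeriv_expSum_eq_zero hu hm hl' hs)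
    (by linarith [l.cast_nonneg (α := ℝ)]) (fun z hz => norm_expSum_le fun k => hz ▸ hE k)
    (by rw [Complex.norm_natCast]; linarith) hT
  rwa [Finset.card_map, Finset.card_range] at hschwarz

end IsAuxiliary

variable {K : Type*} [Field K] [NumberField K]

lemma eq_zero_of_norm_mul_le (σ : K →+* ℂ) {x : 𝓞 K} {Q M : ℝ} (hσ : ‖σ x‖ * Q ≤ M)
    (hx : house (x : K) ≤ M) (hQ : M ^ Module.finrank ℚ K < Q) : x = 0 := by
  by_contra hx0
  have hM : 0 ≤ M := (house_nonneg (x : K)).trans hx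
  have hQ0 : 0 < Q := (pow_nonneg hM _).trans_lt hQ
  have hd : Module.finrank ℚ K = Module.finrank ℚ K - 1 + 1 :=
    (Nat.sub_add_cancel Module.finrank_pos).symm
  refine hQ.not_ge ?_
  calc Q ≤ ‖σ x‖ * house (x : K) ^ (Module.finrank ℚ K - 1) * Q :=
        le_mul_of_one_le_left hQ0.le (one_le_norm_mul_house_pow σ hx0)
    _ = ‖σ x‖ * Q * house (x : K) ^ (Module.finrank ℚ K - 1) := by ring
    _ ≤ M * M ^ (Module.finrank ℚ K - 1) := by
        gcongr
        · exact pow_nonneg (house_nonneg (x : K)) _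
        · exact house_nonneg (x : K)
    _ = M ^ Module.finrank ℚ K := by rw [← pow_succ', ← hd]

/- Each derivative of the auxiliary function has many zeros, so by Schwarz's lemma it is small at
the new points; but its value there is an algebraic integer with small conjugates, hence zero. -/
lemma IsAuxiliary.extrapolate (σ : K →+* ℂ) {p u : I → 𝓞 K} {b : I → ι → 𝓞 K} {lam : ι → ℂ}
    (hu : ∀ k, Complex.exp (∑ r, σ (b k r) * lam r) = σ (u k)) {T S X X' : ℕ} {E : ℝ}
    (h : IsAuxiliary p u b (T + S) X) (hX : X ≤ X')
    (hp : ∀ m : ι → ℕ, (∀ r, m r < T) →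
      ∑ k, house (p k * ∏ r, b k r ^ m r : K) ≤ Real.exp E)
    (hub : ∀ k, ∀ l < X', house (u k : K) ^ l ≤ Real.exp E)
    (hw : ∀ k, ‖∑ r, σ (b k r) * lam r‖ * (3 * X') ≤ E)
    (hE : 2 * E * Module.finrank ℚ K < X * S * Real.log 2) :
    IsAuxiliary p u b T X' := by
  intro m hm l hl
  have hvalue : expSum (fun k => σ (p k) * ∏ r, σ (b k r) ^ m r) (fun k => ∑ r, σ (b k r) * lam r) l
      = σ ((∑ k, p k * (∏ r, b k r ^ m r) * u k ^ l : 𝓞 K) : K) := by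
    rw [expSum_natCast hu]
    simp
  have hsmall : ‖σ ((∑ k, p k * (∏ r, b k r ^ m r) * u k ^ l : 𝓞 K) : K)‖ * 2 ^ (X * S) ≤
      Real.exp (2 * E) := by
    rw [← hvalue, two_mul, Real.exp_add]
    refine (((h.map (algebraMap (𝓞 K) K)).map σ).norm_expSum_mul_two_pow_le hu hm hX hl hw).trans ?_
    gcongr
    refine (Finset.sum_le_sum fun k _ => ?_).trans (hp m hm)
    simpa using norm_embedding_le_house (p k * ∏ r, b k r ^ m r : K) σ
  refine eq_zero_of_norm_mul_le σ hsmall ?_ ?_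
  · calc house ((∑ k, p k * (∏ r, b k r ^ m r) * u k ^ l : 𝓞 K) : K)
        ≤ ∑ k, house (p k * ∏ r, b k r ^ m r : K) * Real.exp E := by
          simp only [map_sum, map_mul, map_prod, map_pow]
          refine (house_sum_le_sum_house _ _).trans (Finset.sum_le_sum fun k _ => ?_)
          refine (house_mul_le _ _).trans ?_
          gcongr
          · exact house_nonneg _
          · exact (house_pow_le _ _).trans (hub k l hl)
      _ ≤ Real.exp E * Real.exp E := by
          rw [← Finset.sum_mul]
          gcongr
          exact hp m hm
      _ = Real.exp (2 * E) := by rw [← Real.exp_add, two_mul]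
  · rw [← Real.exp_nat_mul, ← Real.lt_log_iff_exp_lt (by positivity), Real.log_pow]
    push_cast
    linarith

end Auxiliary

/-! ### Non-existence of auxiliary vectors of high order -/

section Uniqueness

variable {I : Type*} [Fintype I]

lemma sum_mul_eval_mul_eval_eq_zero {F : Type*} [CommSemiring F] {v w u : I → F} {S X : ℕ}
    (h : ∀ s < S, ∀ l < X, ∑ k, v k * w k ^ s * u k ^ l = 0) {P Q : Polynomial F}
    (hP : P.natDegree < S) (hQ : Q.natDegree < X) :
    ∑ k, v k * P.eval (w k) * Q.eval (u k) = 0 := by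
  simp only [Polynomial.eval_eq_sum_range' hP, Polynomial.eval_eq_sum_range' hQ, Finset.mul_sum,
    Finset.sum_mul]
  rw [Finset.sum_comm]
  refine Finset.sum_eq_zero fun l hl => ?_
  rw [Finset.sum_comm]
  refine Finset.sum_eq_zero fun s hs => ?_
  calc ∑ k, v k * (P.coeff s * w k ^ s) * (Q.coeff l * u k ^ l)
      = P.coeff s * Q.coeff l * ∑ k, v k * w k ^ s * u k ^ l := by
        rw [Finset.mul_sum]
        exact Finset.sum_congr rfl fun k _ => by ring
    _ = 0 := by rw [h s (Finset.mem_range.1 hs) l (Finset.mem_range.1 hl), mul_zero]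

/- Test the relations against a product of two polynomials, in `w` and in `u`, which vanishes at all
indices but one. -/
lemma eq_zero_of_forall_sum_mul_pow_mul_pow_eq_zero {F : Type*} [Field F] [DecidableEq F]
    {v w u : I → F} {S X : ℕ}
    (hw : Function.Injective w) (hS : ∀ y, (Finset.univ.filter (u · = y)).card ≤ S)
    (hX : Fintype.card I ≤ X) (h : ∀ s < S, ∀ l < X, ∑ k, v k * w k ^ s * u k ^ l = 0) :
    v = 0 := by
  classical
  funext k₀
  set P := Lagrange.nodal ((Finset.univ.filter (u · = u k₀)).erase k₀) w
  set Q := Lagrange.nodal ((Finset.univ.image u).erase (u k₀)) id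
  have hP : P.natDegree < S := by
    rw [Lagrange.natDegree_nodal]
    exact (Finset.card_erase_lt_of_mem (by simp)).trans_le (hS (u k₀))
  have hQ : Q.natDegree < X := by
    rw [Lagrange.natDegree_nodal]
    exact (Finset.card_erase_lt_of_mem (by simp)).trans_le (Finset.card_image_le.trans hX)
  have hPk₀ : P.eval (w k₀) ≠ 0 :=
    Lagrange.eval_nodal_not_at_node fun k hk => hw.ne (Finset.ne_of_mem_erase hk).symm
  have hQk₀ : Q.eval (u k₀) ≠ 0 :=
    Lagrange.eval_nodal_not_at_node fun y hy => (Finset.ne_of_mem_erase hy).symm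
  have hsum := sum_mul_eval_mul_eval_eq_zero h hP hQ
  rw [Fintype.sum_eq_single k₀ fun k hk => ?_] at hsum
  · simpa [hPk₀, hQk₀] using hsum
  · by_cases huk : u k = u k₀
    · rw [Lagrange.eval_nodal_at_node (v := w) (by simp [hk, huk]), mul_zero, zero_mul]
    · rw [show Q.eval (u k) = 0 from
        Lagrange.eval_nodal_at_node (v := id) (i := u k) (by simp [huk]), mul_zero]

variable {κ : Type*} [Fintype κ] {ℓ : κ → ℂ}

lemma injective_sum_nsmul_of_linearIndependent (hℓ : LinearIndependent ℤ ℓ) (L : ℕ) :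
    Function.Injective fun k : κ → Fin L => ∑ o, (k o : ℕ) • ℓ o := by
  intro k k' hkk'
  have hdiff : ∑ o, ((k o : ℤ) - k' o) • ℓ o = 0 := by
    simpa [sub_smul, sub_eq_zero] using hkk'
  funext o
  have ho := Fintype.linearIndependent_iff.1 hℓ _ hdiff o
  exact Fin.ext (by omega)

/- Differences of points of a fibre are integer relations between the `ℓ o` and `2 * π * I`, and
such relations form a group of rank at most one: some coordinate is injective on the fibre. -/
lemma card_filter_exp_sum_nsmul_eq_le [Nonempty κ] [DecidableEq κ] [DecidableEq ℂ]
    (hℓ : LinearIndependent ℤ ℓ) (L : ℕ) (y : ℂ) :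
    (Finset.univ.filter fun k : κ → Fin L => Complex.exp (∑ o, (k o : ℕ) • ℓ o) = y).card ≤ L := by
  set W := Finset.univ.filter fun k : κ → Fin L => Complex.exp (∑ o, (k o : ℕ) • ℓ o) = y
  suffices h : ∃ o, Set.InjOn (fun k : κ → Fin L => k o) W by
    obtain ⟨o, ho⟩ := h
    simpa using Finset.card_le_card_of_injOn (t := Finset.univ)
      (fun k : κ → Fin L => k o) (by simp) ho
  have hperiod : ∀ k ∈ W, ∀ k' ∈ W, ∃ n : ℤ,
      ∑ o, ((k o : ℤ) - k' o) • ℓ o = n • (2 * π * Complex.I) := by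
    intro k hk k' hk'
    simp only [W, Finset.mem_filter, Finset.mem_univ, true_and] at hk hk'
    obtain ⟨n, hn⟩ := Complex.exp_eq_exp_iff_exists_int.1 (hk.trans hk'.symm)
    exact ⟨n, by simpa [sub_smul, sub_eq_iff_eq_add'] using hn⟩
  rcases (W : Set (κ → Fin L)).subsingleton_or_nontrivial with hW | ⟨k₁, h₁, k₀, h₀, hne⟩
  · exact ⟨Classical.arbitrary κ, fun k hk k' hk' _ => hW hk hk'⟩
  obtain ⟨o, ho⟩ := Function.ne_iff.1 hne
  refine ⟨o, fun k hk k' hk' hkk' => ?_⟩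
  obtain ⟨n, hn⟩ := hperiod k₁ h₁ k₀ h₀
  obtain ⟨n', hn'⟩ := hperiod k hk k' hk'
  have hrel : ∀ o, n' * ((k₁ o : ℤ) - k₀ o) - n * ((k o : ℤ) - k' o) = 0 :=
    Fintype.linearIndependent_iff.1 hℓ _ <| by
      simp only [sub_smul _ (n * _), mul_smul, Finset.sum_sub_distrib, ← Finset.smul_sum, hn, hn',
        smul_comm n' n, sub_self]
  have hn'0 : n' = 0 := by
    have hk₁k₀ : (k₁ o : ℤ) - k₀ o ≠ 0 := fun h => ho (Fin.ext (by omega))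
    simpa [congrArg Fin.val hkk', hk₁k₀] using hrel o
  rw [hn'0, zero_smul] at hn'
  exact injective_sum_nsmul_of_linearIndependent hℓ L <| by
    simpa [sub_smul, sub_eq_zero] using hn'

end Uniqueness

/-! ### Construction of auxiliary vectors -/

section Construction

open NumberField

universe u v

variable {I ι κ : Type*} [Fintype I] [Fintype ι] [Fintype κ]

lemma exists_forall_exists_isAuxiliary (K : Type*) [Field K] [NumberField K] : ∃ C : ℝ, 1 ≤ C ∧
    ∀ {I : Type u} {ι : Type v} [Fintype I] [Fintype ι] (u : I → 𝓞 K) (b : I → ι → 𝓞 K)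
      {T X : ℕ} {A : ℝ}, 0 < T → 0 < X → 2 * (T ^ Fintype.card ι * X) ≤ Fintype.card I → 1 ≤ A →
      (∀ m : ι → ℕ, (∀ r, m r < T) → ∀ l < X, ∀ k,
        house ((∏ r, b k r ^ m r) * u k ^ l : K) ≤ A) →
      ∃ p : I → 𝓞 K, p ≠ 0 ∧ IsAuxiliary p u b T X ∧
        ∀ k, house (p k : K) ≤ C * Fintype.card I * A := by
  classical
  obtain ⟨C, hC, hsiegel⟩ := exists_forall_exists_house_le_of_mulVec_eq_zero K
  refine ⟨C, hC, fun {I ι} _ _ u b {T X A} hT hX hcard hA hhouse => ?_⟩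
  set M : Matrix ((ι → Fin T) × Fin X) I (𝓞 K) :=
    .of fun i k => (∏ r, b k r ^ (i.1 r : ℕ)) * u k ^ (i.2 : ℕ) with hM
  have hI : 0 < Fintype.card I := (by positivity : 0 < 2 * (T ^ Fintype.card ι * X)).trans_le hcard
  obtain ⟨k₀⟩ := Fintype.card_pos_iff.1 hI
  have hM0 : M ≠ 0 := fun h => by
    simpa [hM] using congrFun₂ h (fun _ => ⟨0, hT⟩, ⟨0, hX⟩) k₀
  obtain ⟨p, hp, hMp, hpC⟩ := hsiegel M hA hM0 (by simpa using hcard) fun i k => by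
    simpa [hM] using hhouse (fun r => i.1 r) (fun r => (i.1 r).2) i.2 i.2.2 k
  refine ⟨p, hp, fun m hm l hl => ?_, hpC⟩
  calc ∑ k, p k * (∏ r, b k r ^ m r) * u k ^ l
      = M.mulVec p (fun r => ⟨m r, hm r⟩, ⟨l, hl⟩) := by
        simp only [Matrix.mulVec, dotProduct, hM, Matrix.of_apply]
        exact Finset.sum_congr rfl fun k _ => by ring
    _ = 0 := congrFun hMp _

variable {K : Type*} [Field K] [NumberField K] {p u : I → 𝓞 K} {b : I → ι → 𝓞 K}

lemma IsAuxiliary.extrapolate_iterate (σ : K →+* ℂ) {lam : ι → ℂ}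
    (hu : ∀ k, Complex.exp (∑ r, σ (b k r) * lam r) = σ (u k)) {J S : ℕ} {X : ℕ → ℕ} {E : ℕ → ℝ}
    (h : IsAuxiliary p u b ((J + 1) * S) (X 0)) (hX : Monotone X) (hEmono : Monotone E)
    (hp : ∀ m : ι → ℕ, (∀ r, m r < (J + 1) * S) →
      ∑ k, house (p k * ∏ r, b k r ^ m r : K) ≤ Real.exp (E 0))
    (hub : ∀ j, ∀ k, ∀ l < X (j + 1), house (u k : K) ^ l ≤ Real.exp (E j))
    (hw : ∀ j k, ‖∑ r, σ (b k r) * lam r‖ * (3 * X (j + 1)) ≤ E j)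
    (hE : ∀ j, 2 * E j * Module.finrank ℚ K < X j * S * Real.log 2) :
    IsAuxiliary p u b S (X J) := by
  have hstage : ∀ j ≤ J, IsAuxiliary p u b ((J - j + 1) * S) (X j) := by
    intro j
    induction j with
    | zero => exact fun _ => h
    | succ j ih =>
      intro hj
      have hih := ih (by omega)
      rw [show J - j = J - (j + 1) + 1 by omega, add_one_mul _ S] at hih
      refine hih.extrapolate σ hu (hX j.le_succ) (fun m hm => (hp m fun r => ?_).trans ?_)
        (hub j) (hw j) (hE j)
      · exact (hm r).trans_le (Nat.mul_le_mul_right S (by omega))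
      · exact Real.exp_le_exp.2 (hEmono j.zero_le)
  simpa using hstage J le_rfl

section LatticePoints

variable {R : Type*} [CommRing R] {α : κ → R} {β : κ → ι → R} {lam : ι → ℂ} {ℓ : κ → ℂ}

lemma sum_map_sum_nsmul_mul (σ : R →+* ℂ) (hβ : ∀ o, ∑ r, σ (β o r) * lam r = ℓ o) (k : κ → ℕ) :
    ∑ r, σ (∑ o, k o • β o r) * lam r = ∑ o, k o • ℓ o := by
  simp only [map_sum, map_nsmul, Finset.sum_mul, smul_mul_assoc, ← hβ, Finset.smul_sum]
  exact Finset.sum_comm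

lemma exp_sum_nsmul (σ : R →+* ℂ) (hα : ∀ o, Complex.exp (ℓ o) = σ (α o)) (k : κ → ℕ) :
    Complex.exp (∑ o, k o • ℓ o) = σ (∏ o, α o ^ k o) := by
  simp [Complex.exp_sum, Complex.exp_nat_mul, hα]

/- The vanishing moments of order up to `S` in the `b k` give vanishing moments in
`∑ o, k o • ℓ o`, and this contradicts the nonvanishing of a confluent Vandermonde determinant. -/
lemma IsAuxiliary.eq_zero_of_linearIndependent [DecidableEq κ] [Nonempty κ] {σ : R →+* ℂ}
    (hσ : Function.Injective σ) (hℓ : LinearIndependent ℤ ℓ)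
    (hβ : ∀ o, ∑ r, σ (β o r) * lam r = ℓ o) (hα : ∀ o, Complex.exp (ℓ o) = σ (α o))
    {L S X : ℕ} {p : (κ → Fin L) → R} (hS : L ≤ S) (hX : L ^ Fintype.card κ ≤ X)
    (h : IsAuxiliary p (fun k => ∏ o, α o ^ (k o : ℕ)) (fun k r => ∑ o, (k o : ℕ) • β o r) S X) :
    p = 0 := by
  classical
  have hzero : (fun k => σ (p k)) = 0 := by
    refine eq_zero_of_forall_sum_mul_pow_mul_pow_eq_zero (S := S) (X := X)
      (w := fun k : κ → Fin L => ∑ o, (k o : ℕ) • ℓ o)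
      (u := fun k => Complex.exp (∑ o, (k o : ℕ) • ℓ o))
      (injective_sum_nsmul_of_linearIndependent hℓ L)
      (fun y => ?_) (by simpa using hX) fun s hs l hl => ?_
    · exact (card_filter_exp_sum_nsmul_eq_le hℓ L y).trans hS
    · have hmoment := (h.map σ).sum_mul_prod_pow_mul_pow_eq_zero lam hl (s := s) (m := 0)
        fun _ => by simpa using hs
      simp only [sum_map_sum_nsmul_mul σ hβ, ← exp_sum_nsmul σ hα] at hmoment
      simpa using hmoment
  exact funext fun k => hσ (by simpa using congrFun hzero k)

end LatticePoints

section HouseBounds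

lemma norm_sum_nsmul_le {E : Type*} [SeminormedAddCommGroup E] {x : κ → E} {A : ℝ}
    (hx : ∀ o, ‖x o‖ ≤ A) {L : ℕ} (k : κ → Fin L) :
    ‖∑ o, (k o : ℕ) • x o‖ ≤ Fintype.card κ * (L * A) := by
  refine (norm_sum_le_of_le (f := fun o => (k o : ℕ) • x o) Finset.univ fun o _ =>
    (norm_nsmul_le.trans ?_ : _ ≤ L * A)).trans (by simp)
  gcongr
  · exact (k o).2.le
  · exact hx o

lemma house_sum_nsmul_le {x : κ → K} {A : ℝ} (hx : ∀ o, house (x o) ≤ A) {L : ℕ}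
    (k : κ → Fin L) : house (∑ o, (k o : ℕ) • x o) ≤ Fintype.card κ * (L * A) := by
  simpa [house] using norm_sum_nsmul_le (x := fun o => canonicalEmbedding K (x o)) hx k

lemma house_prod_pow_le_exp {x : ι → K} {B : ℝ} (hB : 0 ≤ B)
    (hx : ∀ r, house (x r) ≤ Real.exp B) {m : ι → ℕ} {M : ℕ} (hm : ∀ r, m r ≤ M) :
    house (∏ r, x r ^ m r) ≤ Real.exp (Fintype.card ι * (M * B)) := by
  calc house (∏ r, x r ^ m r) ≤ ∏ r, house (x r ^ m r) := house_prod_le_prod_house _ _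
    _ ≤ ∏ _r : ι, Real.exp (M * B) :=
        Finset.prod_le_prod (fun r _ => house_nonneg _) fun r _ => by
          calc house (x r ^ m r) ≤ house (x r) ^ m r := house_pow_le _ _
            _ ≤ Real.exp B ^ m r := by
                gcongr
                exacts [house_nonneg _, hx r]
            _ ≤ Real.exp B ^ M := pow_le_pow_right₀ (Real.one_le_exp hB) (hm r)
            _ = Real.exp (M * B) := (Real.exp_nat_mul B M).symm
    _ = Real.exp (Fintype.card ι * (M * B)) := by
        rw [Finset.prod_const, Finset.card_univ, ← Real.exp_nat_mul]

end HouseBounds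

end Construction

section SmallAuxiliary

open NumberField

variable {ι κ : Type*} [Fintype ι] [Fintype κ] {K : Type*} [Field K] [NumberField K]
  {α : κ → 𝓞 K} {β : κ → ι → 𝓞 K} {B : ℝ}

lemma natCast_pow_le_exp (g a : ℕ) : (g : ℝ) ^ a ≤ Real.exp (a * g) := by
  rw [Real.exp_nat_mul]
  gcongr
  exact (lt_add_one _).le.trans (Real.add_one_le_exp _)

lemma house_prod_sum_nsmul_pow_le (hB : 0 ≤ B) (hβ : ∀ o r, house (β o r : K) ≤ Real.exp B)
    {g a M : ℕ} (hg : 1 ≤ g) {m : ι → ℕ} (hm : ∀ r, m r ≤ M) (k : κ → Fin (g ^ a)) :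
    house (∏ r, (∑ o, (k o : ℕ) • (β o r : K)) ^ m r) ≤
      Real.exp (Fintype.card ι * (M * ((Fintype.card κ + a + B) * g))) := by
  have hg' : (1 : ℝ) ≤ g := by exact_mod_cast hg
  refine house_prod_pow_le_exp (by positivity) (fun r => ?_) hm
  calc house (∑ o, (k o : ℕ) • (β o r : K))
      ≤ Fintype.card κ * ((g ^ a : ℕ) * Real.exp B) := house_sum_nsmul_le (fun o => hβ o r) k
    _ ≤ Real.exp (Fintype.card κ) * (Real.exp (a * g) * Real.exp B) := by
        push_cast
        gcongr
        · exact (lt_add_one _).le.trans (Real.add_one_le_exp _)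
        · exact natCast_pow_le_exp g a
    _ = Real.exp (Fintype.card κ + (a * g + B)) := by rw [Real.exp_add, Real.exp_add]
    _ ≤ Real.exp ((Fintype.card κ + a + B) * g) := by
        gcongr
        nlinarith [(Fintype.card κ).cast_nonneg (α := ℝ)]

lemma house_prod_pow_pow_le (hB : 0 ≤ B) (hα : ∀ o, house (α o : K) ≤ Real.exp B) {g a c : ℕ}
    (k : κ → Fin (g ^ a)) {l : ℕ} (hl : l ≤ g ^ c) :
    house (∏ o, (α o : K) ^ (k o : ℕ)) ^ l ≤ Real.exp (Fintype.card κ * B * g ^ (a + c)) := by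
  calc house (∏ o, (α o : K) ^ (k o : ℕ)) ^ l
      ≤ Real.exp (Fintype.card κ * ((g ^ a : ℕ) * B)) ^ l := by
        gcongr
        · exact house_nonneg _
        · exact house_prod_pow_le_exp hB hα fun o => (k o).2.le
    _ = Real.exp (Fintype.card κ * B * (g ^ a * l)) := by
        rw [← Real.exp_nat_mul]
        push_cast
        ring_nf
    _ ≤ Real.exp (Fintype.card κ * B * g ^ (a + c)) := by
        rw [pow_add]
        gcongr
        exact_mod_cast hl

lemma two_mul_pow_mul_pow_le {N n J g : ℕ} (hn : n < N) (hg : 2 * (J + 1) ^ N ≤ g) :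
    2 * (((J + 1) * g ^ (4 * N + 2)) ^ n * g ^ (2 * N)) ≤ (g ^ (4 * N)) ^ N := by
  have hg1 : 1 ≤ g := (by positivity : 0 < 2 * (J + 1) ^ N).trans_le hg
  calc 2 * (((J + 1) * g ^ (4 * N + 2)) ^ n * g ^ (2 * N))
      = 2 * (J + 1) ^ n * g ^ ((4 * N + 2) * n + 2 * N) := by
        rw [mul_pow, ← pow_mul, pow_add]
        ring
    _ ≤ 2 * (J + 1) ^ N * g ^ ((4 * N + 2) * n + 2 * N) := by gcongr; omega
    _ ≤ g * g ^ ((4 * N + 2) * n + 2 * N) := by gcongr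
    _ = g ^ ((4 * N + 2) * n + 2 * N + 1) := (pow_succ' _ _).symm
    _ ≤ g ^ (4 * N * N) := Nat.pow_le_pow_right hg1 (by nlinarith)
    _ = (g ^ (4 * N)) ^ N := pow_mul _ _ _

lemma house_prod_sum_nsmul_pow_le_exp_mul_pow {N J g : ℕ} (hιN : Fintype.card ι ≤ N)
    (hκN : Fintype.card κ = N) (hB : 0 ≤ B) (hβ : ∀ o r, house (β o r : K) ≤ Real.exp B)
    (hN : 1 ≤ N) (hg : 1 ≤ g) {m : ι → ℕ} (hm : ∀ r, m r < (J + 1) * g ^ (4 * N + 2))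
    (k : κ → Fin (g ^ (4 * N))) :
    house (∏ r, (∑ o, (k o : ℕ) • (β o r : K)) ^ m r) ≤
      Real.exp (N * (J + 1) * (5 * N + B) * g ^ (6 * N + 1)) := by
  refine (house_prod_sum_nsmul_pow_le hB hβ hg (fun r => (hm r).le) k).trans ?_
  rw [hκN]
  refine Real.exp_le_exp.2 ?_
  calc (Fintype.card ι : ℝ) * (((J + 1) * g ^ (4 * N + 2) : ℕ) * ((N + (4 * N : ℕ) + B) * g))
      ≤ N * (((J + 1) * g ^ (4 * N + 2) : ℕ) * ((N + (4 * N : ℕ) + B) * g)) := by gcongr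
    _ = N * (J + 1) * (5 * N + B) * g ^ (4 * N + 3) := by push_cast; ring
    _ ≤ N * (J + 1) * (5 * N + B) * g ^ (6 * N + 1) := by
        gcongr ?_ * ?_
        exact pow_le_pow_right₀ (by exact_mod_cast hg) (by omega)

lemma sum_house_mul_le {I : Type*} [Fintype I] {p x : I → K} {P Q : ℝ}
    (hp : ∀ k, house (p k) ≤ P) (hx : ∀ k, house (x k) ≤ Q) :
    ∑ k, house (p k * x k) ≤ Fintype.card I * (P * Q) := by
  refine (Finset.sum_le_card_nsmul _ _ (P * Q) fun k _ => (house_mul_le _ _).trans ?_).trans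
    (by simp)
  exact mul_le_mul (hp k) (hx k) (house_nonneg _) ((house_nonneg _).trans (hp k))

lemma pow_mul_mul_exp_le_exp {N g : ℕ} {C D D' G : ℝ} (hC : 0 ≤ C) (hG : 1 ≤ G) (hgG : g ≤ G) :
    (g : ℝ) ^ (4 * N * N) * (C * (g : ℝ) ^ (4 * N * N) * Real.exp (D * G) * Real.exp (D' * G)) ≤
      Real.exp ((C + 8 * N ^ 2 + D + D') * G) := by
  calc (g : ℝ) ^ (4 * N * N) * (C * (g : ℝ) ^ (4 * N * N) * Real.exp (D * G) * Real.exp (D' * G))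
      ≤ Real.exp ((4 * N * N : ℕ) * g) * (Real.exp C * Real.exp ((4 * N * N : ℕ) * g) *
          Real.exp (D * G) * Real.exp (D' * G)) := by
        gcongr
        · exact natCast_pow_le_exp g _
        · exact (lt_add_one _).le.trans (Real.add_one_le_exp _)
        · exact natCast_pow_le_exp g _
    _ = Real.exp (C + 8 * N ^ 2 * g + D * G + D' * G) := by
        simp only [← Real.exp_add]
        push_cast
        ring_nf
    _ ≤ Real.exp ((C + 8 * N ^ 2 + D + D') * G) := by
        refine Real.exp_le_exp.2 ?_
        nlinarith [mul_le_mul_of_nonneg_left hgG (sq_nonneg (N : ℝ))]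

lemma exists_isAuxiliary_sum_house_le [DecidableEq κ] (hcard : Fintype.card ι < Fintype.card κ)
    (hB : 0 ≤ B) (hα : ∀ o, house (α o : K) ≤ Real.exp B)
    (hβ : ∀ o r, house (β o r : K) ≤ Real.exp B) {N : ℕ} (hN : Fintype.card κ = N) (J : ℕ) :
    ∃ C : ℝ, 0 ≤ C ∧ ∀ g : ℕ, 2 * (J + 1) ^ N ≤ g →
      ∃ p : (κ → Fin (g ^ (4 * N))) → 𝓞 K, p ≠ 0 ∧
        IsAuxiliary p (fun k => ∏ o, α o ^ (k o : ℕ)) (fun k r => ∑ o, (k o : ℕ) • β o r)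
          ((J + 1) * g ^ (4 * N + 2)) (g ^ (2 * N)) ∧
        ∀ m : ι → ℕ, (∀ r, m r < (J + 1) * g ^ (4 * N + 2)) →
          ∑ k, house (p k * ∏ r, (∑ o, (k o : ℕ) • (β o r : K)) ^ m r) ≤
            Real.exp (C * g ^ (6 * N + 1)) := by
  obtain ⟨C₁, hC₁, hsiegel⟩ := exists_forall_exists_isAuxiliary K
  set D : ℝ := N * (J + 1) * (5 * N + B)
  refine ⟨C₁ + 8 * N ^ 2 + (D + N * B) + D, by positivity, fun g hg => ?_⟩
  have hg1 : 1 ≤ g := (by positivity : 0 < 2 * (J + 1) ^ N).trans_le hg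
  have hg1' : (1 : ℝ) ≤ g := by exact_mod_cast hg1
  have hb := fun (m : ι → ℕ) (hm : ∀ r, m r < (J + 1) * g ^ (4 * N + 2)) =>
    house_prod_sum_nsmul_pow_le_exp_mul_pow (by omega) hN hB hβ (by omega) hg1 hm
  obtain ⟨p, hp, haux, hpC⟩ := hsiegel (T := (J + 1) * g ^ (4 * N + 2)) (X := g ^ (2 * N))
    (A := Real.exp ((D + N * B) * g ^ (6 * N + 1)))
    (fun k : κ → Fin (g ^ (4 * N)) => ∏ o, α o ^ (k o : ℕ)) (fun k r => ∑ o, (k o : ℕ) • β o r)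
    (by positivity) (by positivity)
    (by simpa [hN] using two_mul_pow_mul_pow_le (hN ▸ hcard) hg)
    (Real.one_le_exp (by positivity)) fun m hm l hl k => by
      have hu : house (∏ o, (α o : K) ^ (k o : ℕ)) ^ l ≤ Real.exp (N * B * g ^ (6 * N + 1)) := by
        refine (house_prod_pow_pow_le hB hα k hl.le).trans (Real.exp_le_exp.2 ?_)
        rw [hN]
        gcongr ?_ * ?_
        exact pow_le_pow_right₀ hg1' (by omega)
      push_cast
      rw [add_mul, Real.exp_add]
      exact (house_mul_le _ _).trans (mul_le_mul (hb m hm k) ((house_pow_le _ _).trans hu)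
        (house_nonneg _) (Real.exp_nonneg _))
  refine ⟨p, hp, haux, fun m hm => (sum_house_mul_le hpC (hb m hm)).trans ?_⟩
  have hcardI : (Fintype.card (κ → Fin (g ^ (4 * N))) : ℝ) = (g : ℝ) ^ (4 * N * N) := by
    simp [hN, pow_mul]
  rw [hcardI]
  exact pow_mul_mul_exp_le_exp (by positivity) (one_le_pow₀ hg1')
    (le_self_pow₀ hg1' (Nat.succ_ne_zero _))

end SmallAuxiliary

/-! ### Linear independence of logarithms over the algebraic numbers -/

section LinearForms

open NumberField Filter Module

variable {ι κ : Type*} [Fintype ι] [Fintype κ] {K : Type*} [Field K] [NumberField K]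
  {α : κ → 𝓞 K} {β : κ → ι → 𝓞 K} {B : ℝ}

lemma IsAuxiliary.of_sum_house_le [DecidableEq κ] {σ : K →+* ℂ} {lam : ι → ℂ} {ℓ : κ → ℂ}
    (hβℓ : ∀ o, ∑ r, σ (β o r) * lam r = ℓ o) (hαℓ : ∀ o, Complex.exp (ℓ o) = σ (α o))
    (hB : 0 ≤ B) (hα : ∀ o, house (α o : K) ≤ Real.exp B) (hℓ : ∀ o, ‖ℓ o‖ ≤ B)
    {N J g : ℕ} {C : ℝ} (hN : Fintype.card κ = N) (hC : 0 ≤ C) (hg : 1 ≤ g)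
    (hgC : 2 * (C + 3 * N * B) * finrank ℚ K < g * Real.log 2)
    {p : (κ → Fin (g ^ (4 * N))) → 𝓞 K}
    (h : IsAuxiliary p (fun k => ∏ o, α o ^ (k o : ℕ)) (fun k r => ∑ o, (k o : ℕ) • β o r)
      ((J + 1) * g ^ (4 * N + 2)) (g ^ (2 * N)))
    (hp : ∀ m : ι → ℕ, (∀ r, m r < (J + 1) * g ^ (4 * N + 2)) →
      ∑ k, house (p k * ∏ r, (∑ o, (k o : ℕ) • (β o r : K)) ^ m r) ≤
        Real.exp (C * g ^ (6 * N + 1))) :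
    IsAuxiliary p (fun k => ∏ o, α o ^ (k o : ℕ)) (fun k r => ∑ o, (k o : ℕ) • β o r)
      (g ^ (4 * N + 2)) (g ^ (2 * N + J)) := by
  have hg' : (1 : ℝ) ≤ g := by exact_mod_cast hg
  have hsum : ∀ k : κ → Fin (g ^ (4 * N)),
      ∑ r, σ (∑ o, (k o : ℕ) • β o r : 𝓞 K) * lam r = ∑ o, (k o : ℕ) • ℓ o := fun k =>
    sum_map_sum_nsmul_mul (σ.comp (algebraMap (𝓞 K) K)) hβℓ fun o => k o
  refine h.extrapolate_iterate σ (X := fun j => g ^ (2 * N + j)) (lam := lam)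
    (E := fun j => (C + 3 * N * B) * g ^ (6 * N + 1 + j)) (fun k => ?_)
    (fun i j hij => Nat.pow_le_pow_right hg (by omega)) (fun i j hij => ?_) (fun m hm => ?_)
    (fun j k l hl => ?_) (fun j k => ?_) fun j => ?_
  · rw [hsum]
    exact exp_sum_nsmul (σ.comp (algebraMap (𝓞 K) K)) hαℓ fun o => k o
  · dsimp only
    gcongr
  · refine Eq.trans_le (by simp) ((hp m hm).trans (Real.exp_le_exp.2 ?_))
    rw [add_zero]
    gcongr
    exact le_add_of_nonneg_right (by positivity)
  · refine Eq.trans_le (by simp) ((house_prod_pow_pow_le hB hα k hl.le).trans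
      (Real.exp_le_exp.2 ?_))
    rw [hN, show 4 * N + (2 * N + (j + 1)) = 6 * N + 1 + j by ring]
    gcongr
    nlinarith [mul_nonneg N.cast_nonneg hB]
  · rw [hsum]
    calc ‖∑ o, (k o : ℕ) • ℓ o‖ * (3 * (g ^ (2 * N + (j + 1)) : ℕ))
        ≤ N * ((g ^ (4 * N) : ℕ) * B) * (3 * (g ^ (2 * N + (j + 1)) : ℕ)) := by
          gcongr
          exact hN ▸ norm_sum_nsmul_le hℓ k
      _ = 3 * N * B * g ^ (6 * N + 1 + j) := by push_cast; ring
      _ ≤ (C + 3 * N * B) * g ^ (6 * N + 1 + j) := by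
          gcongr
          exact le_add_of_nonneg_left hC
  · calc 2 * ((C + 3 * N * B) * (g : ℝ) ^ (6 * N + 1 + j)) * finrank ℚ K
        = 2 * (C + 3 * N * B) * finrank ℚ K * g ^ (6 * N + 1 + j) := by ring
      _ < g * Real.log 2 * g ^ (6 * N + 1 + j) := by gcongr
      _ = (g ^ (2 * N + j) : ℕ) * (g ^ (4 * N + 2) : ℕ) * Real.log 2 := by push_cast; ring

/- Gelfond's method: an auxiliary vector of order `(J + 1) * S` at few points is extrapolated to one
of order `S` at so many points that it must vanish. -/
theorem not_linearIndependent_of_card_lt {σ : K →+* ℂ} {lam : ι → ℂ} {ℓ : κ → ℂ}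
    (hcard : Fintype.card ι < Fintype.card κ) (hβℓ : ∀ o, ∑ r, σ (β o r) * lam r = ℓ o)
    (hαℓ : ∀ o, Complex.exp (ℓ o) = σ (α o)) : ¬ LinearIndependent ℤ ℓ := by
  classical
  intro hℓ
  obtain ⟨N, hN⟩ : ∃ N, Fintype.card κ = N := ⟨_, rfl⟩
  have : Nonempty κ := Fintype.card_pos_iff.1 (by omega)
  have hexp := fun x => Real.tendsto_exp_atTop.eventually_ge_atTop x
  obtain ⟨B, hB, hα, hβ, hB'⟩ : ∃ B : ℝ, 0 ≤ B ∧ (∀ o, house (α o : K) ≤ Real.exp B) ∧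
      (∀ o r, house (β o r : K) ≤ Real.exp B) ∧ ∀ o, ‖ℓ o‖ ≤ B :=
    ((eventually_ge_atTop 0).and <| (eventually_all.2 fun o => hexp _).and <|
      (eventually_all.2 fun o => eventually_all.2 fun r => hexp _).and <|
      eventually_all.2 fun o => eventually_ge_atTop _).exists
  obtain ⟨C, hC, hC'⟩ := exists_isAuxiliary_sum_house_le hcard hB hα hβ hN (4 * N ^ 2)
  obtain ⟨g, hgJ, hgC⟩ : ∃ g : ℕ, 2 * (4 * N ^ 2 + 1) ^ N ≤ g ∧
      2 * (C + 3 * N * B) * finrank ℚ K < g * Real.log 2 :=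
    ((eventually_ge_atTop _).and <| (tendsto_natCast_atTop_atTop.atTop_mul_const
      (Real.log_pos one_lt_two)).eventually_gt_atTop _).exists
  have hg : 1 ≤ g := (by positivity : 0 < 2 * (4 * N ^ 2 + 1) ^ N).trans_le hgJ
  obtain ⟨p, hp, haux, hpC⟩ := hC' g hgJ
  refine hp ((haux.of_sum_house_le hβℓ hαℓ hB hα hB' hN hC hg hgC hpC).eq_zero_of_linearIndependent
    (σ := σ.comp (algebraMap (𝓞 K) K)) (σ.injective.comp RingOfIntegers.coe_injective)
    hℓ hβℓ hαℓ (Nat.pow_le_pow_right hg (by omega)) ?_)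
  rw [hN, ← pow_mul]
  exact Nat.pow_le_pow_right hg (by nlinarith)

end LinearForms

section Baker

open NumberField Module

lemma card_le_card_of_linearIndependent {ι κ : Type*} [Fintype ι] [Fintype κ] {K : Type*} [Field K]
    [NumberField K] {σ : K →+* ℂ} {x : κ → ι → K} {y : κ → K} (hy : ∀ o, IsIntegral ℤ (y o))
    {lam : ι → ℂ} {ℓ : κ → ℂ} (hℓ : LinearIndependent ℚ ℓ)
    (hx : ∀ o, ∑ r, σ (x o r) * lam r = ℓ o) (hexp : ∀ o, Complex.exp (ℓ o) = σ (y o)) :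
    Fintype.card κ ≤ Fintype.card ι := by
  classical
  obtain ⟨⟨d, hd⟩, hdx⟩ := IsLocalization.exist_integer_multiples_of_finite
    (nonZeroDivisors (𝓞 K)) fun i : κ × ι => x i.1 i.2
  choose z hz using hdx
  have hd0 : σ d ≠ 0 := by
    simpa using nonZeroDivisors.ne_zero hd
  by_contra! hcard
  refine not_linearIndependent_of_card_lt (σ := σ) (α := fun o => ⟨y o, hy o⟩)
    (β := fun o r => z (o, r)) (lam := fun r => lam r / σ d) hcard (fun o => ?_) hexp
    (hℓ.restrict_scalars' ℤ)
  rw [← hx]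
  refine Finset.sum_congr rfl fun r _ => ?_
  have hzr : (z (o, r) : K) = d * x o r := hz (o, r)
  rw [hzr, map_mul]
  field_simp

lemma card_le_card_of_isIntegral_exp {ι κ : Type*} [Fintype ι] [Fintype κ]
    {c : κ → ι → algebraicClosure ℚ ℂ} {lam : ι → ℂ} {ℓ : κ → ℂ} (hℓ : LinearIndependent ℚ ℓ)
    (hc : ∀ o, ∑ r, (c o r : ℂ) * lam r = ℓ o)
    (hexp : ∀ o, IsIntegral ℤ (Complex.exp (ℓ o))) : Fintype.card κ ≤ Fintype.card ι := by
  let T : Set ℂ := (Set.range fun i : κ × ι => (c i.1 i.2 : ℂ)) ∪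
    Set.range fun o => Complex.exp (ℓ o)
  have : Finite T := ((Set.finite_range _).union (Set.finite_range _)).to_subtype
  let K := IntermediateField.adjoin ℚ T
  have hT : ∀ t ∈ T, IsIntegral ℚ t := by
    rintro _ (⟨i, rfl⟩ | ⟨o, rfl⟩)
    · exact (mem_algebraicClosure_iff.1 (c i.1 i.2).2).isIntegral
    · exact (hexp o).tower_top
  have : FiniteDimensional ℚ K := IntermediateField.finiteDimensional_adjoin hT
  have : NumberField K := ⟨⟩
  have hTK : T ⊆ K := IntermediateField.subset_adjoin ℚ T
  exact card_le_card_of_linearIndependent (σ := algebraMap K ℂ)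
    (x := fun o r => ⟨c o r, hTK (.inl ⟨(o, r), rfl⟩)⟩)
    (y := fun o => ⟨Complex.exp (ℓ o), hTK (.inr ⟨o, rfl⟩)⟩)
    (fun o => (isIntegral_algebraMap_iff (algebraMap K ℂ).injective).1 (hexp o)) hℓ hc fun o => rfl

-- This is Baker's theorem on logarithms of algebraic integers.
theorem linearIndependent_algebraicClosure_of_isIntegral_exp {I : Type*} {v : I → ℂ}
    (hv : LinearIndependent ℚ v) (hexp : ∀ i, IsIntegral ℤ (Complex.exp (v i))) :
    LinearIndependent (algebraicClosure ℚ ℂ) v := by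
  rw [linearIndependent_iff_finset_linearIndependent] at hv ⊢
  intro s
  rw [linearIndependent_iff_card_le_finrank_span]
  let V := Submodule.span (algebraicClosure ℚ ℂ) (Set.range (v ∘ ((↑) : s → I)))
  have : FiniteDimensional (algebraicClosure ℚ ℂ) V :=
    FiniteDimensional.span_of_finite _ (Set.finite_range _)
  let b := finBasis (algebraicClosure ℚ ℂ) V
  have hvV : ∀ o : s, v o ∈ V := fun o => Submodule.subset_span ⟨o, rfl⟩
  refine (card_le_card_of_isIntegral_exp (hv s) (c := fun o : s => b.repr ⟨v o, hvV o⟩)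
    (lam := fun r => b r) (fun o => ?_) fun o => hexp o).trans_eq (Fintype.card_fin _)
  have hsum := congrArg V.subtype (b.sum_repr ⟨v o, hvV o⟩)
  rwa [map_sum] at hsum

end Baker

section Dual

lemma exists_linearMap_forall_mem_eq_algebraMap {F L V : Type*} [Field F] [Field L] [Algebra F L]
    [AddCommGroup V] [Module F V] [Module L V] [IsScalarTower F L V] {S : Set V}
    (hS : ∀ B ⊆ S, LinearIndepOn F id B → LinearIndepOn L id B) (φ : V →ₗ[F] F) :
    ∃ Φ : V →ₗ[L] L, ∀ v ∈ S, Φ v = algebraMap F L (φ v) := by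
  obtain ⟨B, hBS, hspan, hB⟩ := exists_linearIndependent F S
  have hBL : LinearIndepOn L id B := hS B hBS hB
  let b := Module.Basis.extend hBL
  let Φ : V →ₗ[L] L := b.constr L fun i => algebraMap F L (φ i)
  have hΦB : ∀ v ∈ B, Φ v = algebraMap F L (φ v) := fun v hv => by
    simpa [b] using b.constr_basis L (fun i => algebraMap F L (φ i)) ⟨v, hBL.subset_extend _ hv⟩
  refine ⟨Φ, fun v hv => ?_⟩
  exact LinearMap.eqOn_span (f := Φ.restrictScalars F) (g := (Algebra.linearMap F L).comp φ) hΦB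
    (hspan ▸ Submodule.subset_span hv)

theorem exists_linearMap_algebraicClosure_eq (φ : ℂ →ₗ[ℚ] ℚ) :
    ∃ Φ : ℂ →ₗ[algebraicClosure ℚ ℂ] algebraicClosure ℚ ℂ,
      ∀ z, IsAlgebraic ℚ (Complex.exp z) → Φ z = algebraMap ℚ _ (φ z) := by
  obtain ⟨Φ, hΦ⟩ := exists_linearMap_forall_mem_eq_algebraMap (L := algebraicClosure ℚ ℂ)
    (S := {z : ℂ | IsIntegral ℤ (Complex.exp z)}) (fun B hBS hB =>
      linearIndependent_algebraicClosure_of_isIntegral_exp hB fun i => hBS i.2) φ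
  refine ⟨Φ, fun z hz => ?_⟩
  obtain ⟨D, hD, hDz⟩ := ((IsFractionRing.isAlgebraic_iff ℤ ℚ ℂ).2 hz).exists_integral_multiple
  have hexp : Complex.exp (Complex.log D) = D := Complex.exp_log (by exact_mod_cast hD)
  have hlog := hΦ (Complex.log D) (by
    simpa [hexp] using isIntegral_algebraMap (R := ℤ) (A := ℂ) (x := D))
  have hadd := hΦ (Complex.log D + z) (by
    simpa [Complex.exp_add, hexp, zsmul_eq_mul] using hDz)
  simp only [map_add, hlog] at hadd
  exact add_left_cancel hadd

end Dual

/-! ### Cosine zeta values at one and derivatives of even `L`-functions at zero -/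

section UnitCirclePolylog

open Filter Topology

lemma norm_geom_sum_le {z : ℂ} (hz : ‖z‖ = 1) (hz1 : z ≠ 1) (n : ℕ) :
    ‖∑ i ∈ Finset.range n, z ^ i‖ ≤ 2 / ‖z - 1‖ := by
  rw [geom_sum_eq hz1, norm_div]
  gcongr
  calc ‖z ^ n - 1‖ ≤ ‖z ^ n‖ + ‖(1 : ℂ)‖ := norm_sub_le _ _
    _ = 2 := by rw [norm_pow, hz, one_pow, norm_one]; norm_num

lemma tendsto_sum_mul_pow_of_summable_sub {z : ℂ} (hz : ‖z‖ = 1) (hz1 : z ≠ 1) {c : ℕ → ℂ}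
    (hc : Tendsto c atTop (𝓝 0)) (hs : Summable fun n => ‖c n - c (n + 1)‖) :
    Tendsto (fun N => ∑ n ∈ Finset.range N, c n * z ^ n) atTop
      (𝓝 (∑' n, (c n - c (n + 1)) * ∑ i ∈ Finset.range (n + 1), z ^ i)) := by
  have hparts : ∀ N, ∑ n ∈ Finset.range (N + 1), c n * z ^ n =
      c N * (∑ i ∈ Finset.range (N + 1), z ^ i) +
        ∑ n ∈ Finset.range N, (c n - c (n + 1)) * ∑ i ∈ Finset.range (n + 1), z ^ i := by
    intro N
    have h := Finset.sum_range_by_parts c (fun n => z ^ n) (N + 1)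
    simp only [smul_eq_mul, Nat.add_sub_cancel] at h
    rw [h, sub_eq_add_neg, ← Finset.sum_neg_distrib]
    exact congrArg _ (Finset.sum_congr rfl fun n _ => by ring)
  have hsum : Summable fun n => (c n - c (n + 1)) * ∑ i ∈ Finset.range (n + 1), z ^ i :=
    .of_norm_bounded (hs.mul_right (2 / ‖z - 1‖)) fun n => by
      rw [norm_mul]
      gcongr
      exact norm_geom_sum_le hz hz1 _
  have hboundary : Tendsto (fun N => c N * ∑ i ∈ Finset.range (N + 1), z ^ i) atTop (𝓝 0) :=
    hc.zero_mul_isBoundedUnder_le <| isBoundedUnder_of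
      ⟨2 / ‖z - 1‖, fun N => norm_geom_sum_le hz hz1 _⟩
  rw [← tendsto_add_atTop_iff_nat 1]
  simpa only [hparts, zero_add] using hboundary.add hsum.hasSum.tendsto_sum_nat

lemma norm_inv_rpow_sub_inv_rpow_succ_le {s : ℝ} (h1 : 1 ≤ s) (h2 : s ≤ 2) (n : ℕ) :
    ‖((n : ℝ) ^ s)⁻¹ - (((n + 1 : ℕ) : ℝ) ^ s)⁻¹‖ ≤ 4 / ((n : ℝ) + 1) ^ 2 := by
  rcases Nat.eq_zero_or_pos n with rfl | hn
  · simp [Real.zero_rpow (show s ≠ 0 by linarith)]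
  have hn1 : (1 : ℝ) ≤ n := by exact_mod_cast hn
  have hfactor : ((n : ℝ) ^ s)⁻¹ - (((n + 1 : ℕ) : ℝ) ^ s)⁻¹ =
      ((n : ℝ) ^ s)⁻¹ * (1 - (n / (n + 1)) ^ s) := by
    rw [Real.div_rpow (by positivity) (by positivity)]
    push_cast
    field_simp
  have hbernoulli : 1 - (n / (n + 1) : ℝ) ^ s ≤ 2 / (n + 1) := by
    have h := one_add_mul_self_le_rpow_one_add (s := -1 / ((n : ℝ) + 1))
      (by rw [le_div_iff₀ (by positivity)]; linarith) h1
    rw [show 1 + -1 / ((n : ℝ) + 1) = n / (n + 1) by field_simp; ring] at h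
    have hs : s / ((n : ℝ) + 1) ≤ 2 / (n + 1) := by gcongr
    rw [mul_div_assoc', mul_neg_one, neg_div] at h
    linarith
  have hnonneg : 0 ≤ 1 - (n / (n + 1) : ℝ) ^ s :=
    sub_nonneg.2 <| Real.rpow_le_one (by positivity)
      ((div_le_one (by positivity)).2 (by linarith)) (by linarith)
  rw [hfactor, Real.norm_of_nonneg (by positivity)]
  calc ((n : ℝ) ^ s)⁻¹ * (1 - (n / (n + 1)) ^ s) ≤ (n : ℝ)⁻¹ * (2 / (n + 1)) := by
        gcongr
        exact Real.self_le_rpow_of_one_le hn1 h1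
    _ ≤ 4 / ((n : ℝ) + 1) ^ 2 := by
        rw [inv_mul_eq_div, div_div, div_le_div_iff₀ (by positivity) (by positivity)]
        nlinarith

lemma summable_four_div_add_one_sq : Summable fun n : ℕ => 4 / ((n : ℝ) + 1) ^ 2 := by
  simpa [div_eq_mul_inv] using
    ((summable_nat_add_iff 1).2 (Real.summable_nat_pow_inv.2 one_lt_two)).mul_left 4

/-- The series `∑ zⁿ / nˢ` after summation by parts. On the unit circle away from `1` it is
dominated by a convergent series that does not depend on `s ∈ [1, 2]`. -/
noncomputable def polylogByParts (z : ℂ) (s : ℝ) : ℂ :=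
  ∑' n : ℕ, ((((n : ℝ) ^ s)⁻¹ : ℝ) - ((((n + 1 : ℕ) : ℝ) ^ s)⁻¹ : ℝ)) *
    ∑ i ∈ Finset.range (n + 1), z ^ i

variable {z : ℂ} {s : ℝ}

lemma tendsto_sum_inv_rpow_mul_pow (hz : ‖z‖ = 1) (hz1 : z ≠ 1) (h1 : 1 ≤ s) (h2 : s ≤ 2) :
    Tendsto (fun N => ∑ n ∈ Finset.range N, ((((n : ℝ) ^ s)⁻¹ : ℝ) : ℂ) * z ^ n) atTop
      (𝓝 (polylogByParts z s)) := by
  refine tendsto_sum_mul_pow_of_summable_sub hz hz1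
    (c := fun n : ℕ => ((((n : ℝ) ^ s)⁻¹ : ℝ) : ℂ)) ?_ ?_
  · have h := (tendsto_rpow_neg_atTop (y := s) (by linarith)).comp
      (tendsto_natCast_atTop_atTop (R := ℝ))
    simpa [Function.comp_def, Real.rpow_neg] using
      (Complex.continuous_ofReal.tendsto 0).comp h
  · refine summable_four_div_add_one_sq.of_nonneg_of_le (fun _ => norm_nonneg _) fun n => ?_
    rw [← Complex.ofReal_sub, Complex.norm_real]
    exact norm_inv_rpow_sub_inv_rpow_succ_le h1 h2 n

lemma tendsto_polylogByParts (hz : ‖z‖ = 1) (hz1 : z ≠ 1) :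
    Tendsto (polylogByParts z) (𝓝[>] 1) (𝓝 (polylogByParts z 1)) := by
  have hterm : ∀ n : ℕ, ContinuousAt (fun s : ℝ => ((((n : ℝ) ^ s)⁻¹ : ℝ) : ℂ)) 1 := fun n => by
    simp only [← Real.rpow_neg n.cast_nonneg]
    exact Complex.continuous_ofReal.continuousAt.comp
      ((Real.continuousAt_const_rpow' (by norm_num)).comp continuousAt_neg)
  refine tendsto_tsum_of_dominated_convergence
    (bound := fun n : ℕ => 4 / ((n : ℝ) + 1) ^ 2 * (2 / ‖z - 1‖))
    (summable_four_div_add_one_sq.mul_right _) (fun n => ?_) ?_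
  · exact (((hterm n).sub (hterm (n + 1))).mul_const _).mono_left nhdsWithin_le_nhds
  · filter_upwards [Ioc_mem_nhdsGT one_lt_two] with s hs n
    rw [norm_mul, ← Complex.ofReal_sub, Complex.norm_real]
    gcongr
    · exact norm_inv_rpow_sub_inv_rpow_succ_le hs.1.le hs.2 n
    · exact norm_geom_sum_le hz hz1 _

lemma one_sub_mem_slitPlane (hz : ‖z‖ = 1) (hz1 : z ≠ 1) : 1 - z ∈ Complex.slitPlane := by
  refine .inl ?_
  have hre : z.re ≠ 1 := fun h => hz1 <| by
    simpa [h] using (RCLike.re_eq_self_of_le (a := z) (by simp [hz, h])).symm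
  simpa using lt_of_le_of_ne (hz ▸ Complex.re_le_norm z) hre

/- Abel's limit theorem, applied to the Taylor series of `-log (1 - w)`. -/
lemma polylogByParts_one (hz : ‖z‖ = 1) (hz1 : z ≠ 1) :
    polylogByParts z 1 = -Complex.log (1 - z) := by
  have hAbel : Tendsto (fun r : ℝ => ∑' n : ℕ, ((((n : ℝ) ^ (1 : ℝ))⁻¹ : ℝ) : ℂ) * z ^ n * r ^ n)
      (𝓝[<] 1) (𝓝 (polylogByParts z 1)) :=
    tendsto_map'_iff.1 <| Complex.tendsto_tsum_powerSeries_nhdsWithin_lt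
      (tendsto_sum_inv_rpow_mul_pow hz hz1 le_rfl one_le_two)
  have hlog : ContinuousAt (fun r : ℝ => -Complex.log (1 - z * r)) 1 :=
    (ContinuousAt.clog (by fun_prop) (by simpa using one_sub_mem_slitPlane hz hz1)).neg
  have hlog1 : Tendsto (fun r : ℝ => -Complex.log (1 - z * r)) (𝓝[<] 1)
      (𝓝 (-Complex.log (1 - z))) := by
    simpa using hlog.tendsto.mono_left nhdsWithin_le_nhds
  refine tendsto_nhds_unique hAbel (hlog1.congr' ?_)
  filter_upwards [Ioo_mem_nhdsLT zero_lt_one] with r hr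
  have hzr : ‖z * r‖ < 1 := by
    rw [norm_mul, hz, one_mul, Complex.norm_real, Real.norm_of_nonneg hr.1.le]
    exact hr.2
  rw [← (Complex.hasSum_taylorSeries_neg_log hzr).tsum_eq]
  refine tsum_congr fun n => ?_
  rw [Real.rpow_one, mul_pow]
  push_cast
  ring

end UnitCirclePolylog

section Zeta

open HurwitzZeta Filter Topology

lemma toCircle_ne_one {a : UnitAddCircle} (ha : a ≠ 0) : (AddCircle.toCircle a : ℂ) ≠ 1 := by
  rw [Ne, Circle.coe_eq_one, ← AddCircle.toCircle_zero]
  exact (AddCircle.injective_toCircle one_ne_zero).ne ha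

lemma expZeta_eq_polylogByParts {a : UnitAddCircle} (ha : a ≠ 0) {s : ℝ} (h1 : 1 < s)
    (h2 : s ≤ 2) : expZeta a s = polylogByParts (AddCircle.toCircle a) s := by
  have hparts := tendsto_sum_inv_rpow_mul_pow (Circle.norm_coe _) (toCircle_ne_one ha) h1.le h2
  induction a using QuotientAddGroup.induction_on with
  | H x =>
    refine tendsto_nhds_unique
      (hasSum_expZeta_of_one_lt_re x (s := s) (by simpa using h1)).tendsto_sum_nat
      (hparts.congr fun N => Finset.sum_congr rfl fun n _ => ?_)
    rw [← Circle.coe_pow, ← AddCircle.toCircle_nsmul, ← AddCircle.coe_nsmul,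
      AddCircle.toCircle_apply_mk, Circle.coe_exp, Complex.ofReal_inv,
      Complex.ofReal_cpow n.cast_nonneg, inv_mul_eq_div]
    push_cast
    ring_nf

lemma expZeta_one {a : UnitAddCircle} (ha : a ≠ 0) :
    expZeta a 1 = -Complex.log (1 - AddCircle.toCircle a) := by
  rw [← polylogByParts_one (Circle.norm_coe _) (toCircle_ne_one ha)]
  have hcont : Tendsto (fun s : ℝ => expZeta a s) (𝓝[>] 1) (𝓝 (expZeta a 1)) := by
    have := ((differentiable_expZeta_of_ne_zero ha).continuous.comp
      Complex.continuous_ofReal).tendsto 1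
    simpa [Function.comp_def] using this.mono_left nhdsWithin_le_nhds
  refine tendsto_nhds_unique hcont ((tendsto_polylogByParts (Circle.norm_coe _)
    (toCircle_ne_one ha)).congr' ?_)
  filter_upwards [Ioc_mem_nhdsGT one_lt_two] with s hs
  rw [expZeta_eq_polylogByParts ha hs.1 hs.2]

lemma cosZeta_one {a : UnitAddCircle} (ha : a ≠ 0) :
    cosZeta a 1 = -(Real.log ‖1 - (AddCircle.toCircle a : ℂ)‖ : ℂ) := by
  rw [cosZeta_eq, expZeta_one ha, expZeta_one (neg_ne_zero.2 ha), AddCircle.toCircle_neg,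
    Circle.coe_inv_eq_conj, ← map_one (starRingEnd ℂ), ← map_sub, map_one, Complex.log_conj _
      (Complex.slitPlane_arg_ne_pi
        (one_sub_mem_slitPlane (Circle.norm_coe _) (toCircle_ne_one ha))),
    ← neg_add, Complex.add_conj, Complex.log_re]
  push_cast
  ring

end Zeta

section DerivZero

open HurwitzZeta

/- By the functional equation `hurwitzZetaEven a (1 - s)` is `cos (π s / 2)` times a function
regular at `s = 1`, so only the derivative of the cosine contributes. -/
lemma hasDerivAt_hurwitzZetaEven_zero {a : UnitAddCircle} (ha : a ≠ 0) :
    HasDerivAt (hurwitzZetaEven a) (cosZeta a 1 / 2) 0 := by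
  have hnat : ∀ s : ℂ, 0 < s.re → ∀ n : ℕ, s ≠ -n := by
    rintro _ hs n rfl
    simp at hs
    linarith [n.cast_nonneg (α := ℝ)]
  have hpi : (2 * π : ℂ) ≠ 0 := by simp [Real.pi_ne_zero]
  have hdiff : DifferentiableAt ℂ
      (fun s : ℂ => 2 * (2 * π : ℂ) ^ (-s) * Complex.Gamma s * cosZeta a s) 1 :=
    ((((differentiableAt_const _).mul (differentiableAt_id.neg.const_cpow (.inl hpi))).mul
      (Complex.differentiableAt_Gamma _ (hnat 1 (by simp)))).mul
      (differentiable_cosZeta_of_ne_zero ha 1))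
  have hcos : HasDerivAt (fun s : ℂ => Complex.cos (π * s / 2)) (-(π / 2)) 1 := by
    simpa using (((hasDerivAt_id (1 : ℂ)).const_mul (π : ℂ)).div_const 2).ccos
  have hprod : HasDerivAt (fun s : ℂ => hurwitzZetaEven a (1 - s)) (-(cosZeta a 1 / 2)) 1 := by
    refine ((hdiff.hasDerivAt.mul hcos).congr_deriv ?_).congr_of_eventuallyEq ?_
    · simp only [mul_one, Complex.cos_pi_div_two, mul_zero, zero_add, Complex.Gamma_one,
        Complex.cpow_neg_one]
      field_simp [Real.pi_ne_zero]
    · filter_upwards [Complex.continuous_re.continuousAt.eventually_const_lt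
        (show (0 : ℝ) < (1 : ℂ).re by simp)] with s hs
      rw [hurwitzZetaEven_one_sub a (hnat s hs) (.inl ha), Pi.mul_apply]
      ring
  have hcomp := HasDerivAt.comp_const_sub (1 : ℂ) 0 (by simpa using hprod)
  simpa using hcomp

/-- `log |1 - e^{2πij/q}|`, the real part of the logarithm of a cyclotomic number. The value at
`j = 0` is the junk value `log 0 = 0`. -/
noncomputable def logNormOneSub {q : ℕ} [NeZero q] (j : ZMod q) : ℝ :=
  Real.log ‖1 - ZMod.stdAddChar j‖

variable {q : ℕ} [NeZero q]

lemma cosZeta_toAddCircle_one {j : ZMod q} (hj : j ≠ 0) :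
    cosZeta (ZMod.toAddCircle j) 1 = -(logNormOneSub j : ℂ) :=
  cosZeta_one (by simpa using hj)

lemma hasDerivAt_LFunction_zero {Φ : ZMod q → ℂ} (hΦ : Function.Even Φ) (hΦ0 : Φ 0 = 0) :
    HasDerivAt (ZMod.LFunction Φ) (-(∑ j, Φ j * logNormOneSub j) / 2) 0 := by
  have hterm : ∀ j : ZMod q, HasDerivAt (fun s => Φ j * hurwitzZetaEven (ZMod.toAddCircle j) s)
      (Φ j * (-(logNormOneSub j : ℂ) / 2)) 0 := fun j => by
    rcases eq_or_ne j 0 with rfl | hj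
    · simp [hΦ0, hasDerivAt_const]
    · rw [← cosZeta_toAddCircle_one hj]
      exact (hasDerivAt_hurwitzZetaEven_zero (by simpa using hj)).const_mul _
  have hzero : ∑ j : ZMod q, Φ j * hurwitzZetaEven (ZMod.toAddCircle j) 0 = 0 :=
    Finset.sum_eq_zero fun j _ => by
      rcases eq_or_ne j 0 with rfl | hj <;> simp [hurwitzZetaEven_apply_zero, *]
  have hpow : HasDerivAt (fun s : ℂ => (q : ℂ) ^ (-s)) _ 0 :=
    (hasDerivAt_id (0 : ℂ)).neg.const_cpow (.inl (NeZero.ne _))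
  rw [funext (ZMod.LFunction_def_even hΦ)]
  refine (hpow.mul (HasDerivAt.fun_sum fun j _ => hterm j)).congr_deriv ?_
  simp [hzero, Finset.sum_neg_distrib, Finset.sum_div, mul_div_assoc, neg_div]

lemma sum_Icc_natCast_zmod {M : Type*} [AddCommMonoid M] (G : ZMod q → M) :
    ∑ a ∈ Finset.Icc 1 q, G a = ∑ j, G j := by
  calc ∑ a ∈ Finset.Icc 1 q, G a
    _ = ∑ a ∈ Finset.range q, G (a + 1 : ℕ) := by
        rw [Finset.range_eq_Ico, Finset.sum_Ico_add' (fun a : ℕ => G a)]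
        rfl
    _ = ∑ j, G (j + 1) := by
        refine Finset.sum_nbij' (fun a => (a : ZMod q)) ZMod.val ?_ ?_ ?_ ?_ ?_ <;>
          simp +contextual [ZMod.val_lt, ZMod.val_natCast, Nat.mod_eq_of_lt]
    _ = ∑ j, G j := Equiv.sum_comp (Equiv.addRight 1) G

lemma Lderiv0_intCast {Φ : ZMod q → ℂ} (hΦ : Function.Even Φ) (hΦ0 : Φ 0 = 0) :
    Lderiv0 q (fun m => Φ m) = -(∑ j, Φ j * logNormOneSub j) / 2 := by
  rw [← (hasDerivAt_LFunction_zero hΦ hΦ0).deriv]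
  unfold Lderiv0
  congr 1
  funext s
  rw [ZMod.LFunction, ← sum_Icc_natCast_zmod]
  simp [ZMod.toAddCircle_natCast]

lemma Lderiv0_sum_mul {ι : Type*} [Fintype ι] (c : ι → ℂ) (f : ι → ℤ → ℂ) :
    Lderiv0 q (fun m => ∑ i, c i * f i m) = ∑ i, c i * Lderiv0 q (f i) := by
  have hpow : DifferentiableAt ℂ (fun s : ℂ => (q : ℂ) ^ (-s)) 0 :=
    differentiableAt_id.neg.const_cpow (.inl (NeZero.ne _))
  have hdiff : ∀ i, DifferentiableAt ℂ (fun s : ℂ => (q : ℂ) ^ (-s) * ∑ a ∈ Finset.Icc 1 q,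
      f i a * hurwitzZeta (((a : ℝ) / q : ℝ) : UnitAddCircle) s) 0 := fun i =>
    hpow.mul (.fun_sum fun a _ =>
      (differentiableAt_hurwitzZeta _ zero_ne_one).const_mul _)
  unfold Lderiv0
  simp only [← deriv_const_mul _ (hdiff _)]
  rw [← deriv_fun_sum fun i _ => (hdiff i).const_mul _]
  congr 1
  funext s
  simp only [Finset.mul_sum, Finset.sum_mul]
  rw [Finset.sum_comm]
  exact Finset.sum_congr rfl fun i _ => Finset.sum_congr rfl fun a _ => by ring

lemma apply_val_intCast_of_periodic {α : Type*} {f : ℤ → α} (hf : Function.Periodic f (q : ℤ))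
    (m : ℤ) : f ((m : ZMod q).val : ℤ) = f m := by
  rw [ZMod.val_intCast]
  simpa [Int.emod_def, mul_comm] using hf.sub_int_mul_eq (x := m) (m / q)

end DerivZero

/-! ### Non-vanishing for even characters modulo a prime power -/

section NonVanishing

open DirichletCharacter

lemma Gammaℝ_zero : Complex.Gammaℝ 0 = 0 :=
  Complex.Gammaℝ_eq_zero_iff.2 ⟨0, by simp⟩

lemma hasDerivAt_inv_Gammaℝ_zero : HasDerivAt (fun s => (Complex.Gammaℝ s)⁻¹) (1 / 2) 0 := by
  rw [hasDerivAt_iff_tendsto_slope, one_div]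
  refine (Complex.Gammaℝ_residue_zero.inv₀ two_ne_zero).congr fun s => ?_
  simp [slope_def_field, Gammaℝ_zero, div_eq_mul_inv, mul_comm]

/- The functional equation turns non-vanishing at `1` into non-vanishing of the completed
`L`-function at `0`, where the Gamma factor has a simple pole. -/
lemma deriv_LFunction_zero_ne_zero_of_isPrimitive {N : ℕ} [NeZero N] {χ : DirichletCharacter ℂ N}
    (hprim : χ.IsPrimitive) (hχ : χ.Even) (hχ1 : χ ≠ 1) : deriv χ.LFunction 0 ≠ 0 := by
  have hN : N ≠ 1 := fun hN => hχ1 (level_one' χ hN)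
  have hinv : χ⁻¹.IsPrimitive := (conductor_inv χ).trans hprim
  have hone : completedLFunction χ⁻¹ 1 ≠ 0 := fun h =>
    LFunction_apply_one_ne_zero (inv_ne_one.2 hχ1) (by
      rw [LFunction_eq_completed_div_gammaFactor _ _ (.inl one_ne_zero), h, zero_div])
  have hcompl : completedLFunction χ 0 ≠ 0 := fun h => hone (by
    simpa [h] using hinv.completedLFunction_one_sub 0)
  have hL : χ.LFunction = fun s => completedLFunction χ s * (Complex.Gammaℝ s)⁻¹ := by
    funext s
    rw [LFunction_eq_completed_div_gammaFactor _ _ (.inr hN), hχ.gammaFactor_def, div_eq_mul_inv]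
  have hderiv := (differentiable_completedLFunction hχ1 0).hasDerivAt.mul
    hasDerivAt_inv_Gammaℝ_zero
  rw [hL]
  refine ne_of_eq_of_ne hderiv.deriv ?_
  simpa [Gammaℝ_zero] using hcompl

lemma even_primitiveCharacter {q : ℕ} {χ : DirichletCharacter ℂ q} (hχ : χ.Even) :
    χ.primitiveCharacter.Even := by
  have h := χ.primitiveCharacter_apply_of_isCoprime (a := -1) isCoprime_one_left.neg_left
  rw [DirichletCharacter.Even] at hχ ⊢
  simpa [hχ] using h

variable {q : ℕ} [NeZero q]

lemma deriv_LFunction_one_zero_ne_zero (hq : IsPrimePow q) :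
    deriv (1 : DirichletCharacter ℂ q).LFunction 0 ≠ 0 := by
  obtain ⟨p, k, hp, hk, rfl⟩ := (isPrimePow_nat_iff q).1 hq
  have heuler : HasDerivAt (fun s : ℂ => 1 - (p : ℂ) ^ (-s)) (Complex.log p) 0 := by
    simpa using ((hasDerivAt_id (0 : ℂ)).neg.const_cpow (c := (p : ℂ))
      (.inl (mod_cast hp.ne_zero))).const_sub 1
  have hprod := heuler.mul (differentiableAt_riemannZeta zero_ne_one).hasDerivAt
  have heq : (1 : DirichletCharacter ℂ (p ^ k)).LFunction =ᶠ[nhds 0]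
      (fun s : ℂ => 1 - (p : ℂ) ^ (-s)) * riemannZeta := by
    filter_upwards [isOpen_ne.mem_nhds (zero_ne_one (α := ℂ))] with s hs
    refine (LFunctionTrivChar_eq_mul_riemannZeta hs).trans ?_
    simp [Nat.primeFactors_prime_pow hk.ne' hp]
  have hlog : Complex.log p ≠ 0 := by
    rw [← Complex.natCast_log]
    exact_mod_cast (Real.log_pos (x := p) (mod_cast hp.one_lt)).ne'
  rw [heq.deriv_eq, hprod.deriv]
  simpa [riemannZeta_zero] using hlog

lemma LFunction_primitiveCharacter (hq : IsPrimePow q) {χ : DirichletCharacter ℂ q} (hχ : χ ≠ 1)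
    [NeZero χ.conductor] : χ.primitiveCharacter.LFunction = χ.LFunction := by
  obtain ⟨p, k, hp, hk, rfl⟩ := (isPrimePow_nat_iff q).1 hq
  have hcond : χ.conductor ≠ 1 := mt (eq_one_iff_conductor_eq_one (χ := χ)).2 hχ
  have hprim : χ.primitiveCharacter ≠ 1 := fun h => hχ (by
    rw [← changeLevel_primitiveCharacter χ, h, changeLevel_one])
  have hdvd : p ∣ χ.conductor := by
    obtain ⟨m, -, hm⟩ := (Nat.dvd_prime_pow hp).1 χ.conductor_dvd_level
    rw [hm]
    exact dvd_pow_self p fun h => hcond (by simpa [h] using hm)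
  have hvanish : χ.primitiveCharacter (p : ZMod χ.conductor) = 0 := by
    apply MulChar.map_nonunit
    rwa [ZMod.isUnit_iff_coprime, hp.coprime_iff_not_dvd, not_not]
  funext s
  have hlevel := LFunction_changeLevel χ.conductor_dvd_level χ.primitiveCharacter (s := s)
    (.inl hprim)
  rw [changeLevel_primitiveCharacter] at hlevel
  simp [hlevel, Nat.primeFactors_prime_pow hk.ne' hp, hvanish]

lemma deriv_LFunction_zero_ne_zero (hq : IsPrimePow q) {χ : DirichletCharacter ℂ q}
    (hχ : χ.Even) : deriv χ.LFunction 0 ≠ 0 := by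
  rcases eq_or_ne χ 1 with rfl | hχ1
  · exact deriv_LFunction_one_zero_ne_zero hq
  have : NeZero χ.conductor := ⟨χ.conductor_ne_zero⟩
  rw [← LFunction_primitiveCharacter hq hχ1]
  refine deriv_LFunction_zero_ne_zero_of_isPrimitive χ.primitiveCharacter_isPrimitive
    (even_primitiveCharacter hχ) fun h => hχ1 ?_
  rw [← changeLevel_primitiveCharacter χ, h, changeLevel_one]

lemma sum_mul_logNormOneSub_ne_zero (hq : IsPrimePow q) {χ : DirichletCharacter ℂ q}
    (hχ : χ.Even) : ∑ j, χ j * (logNormOneSub j : ℂ) ≠ 0 := by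
  have : Fact (1 < q) := ⟨hq.one_lt⟩
  intro h
  refine deriv_LFunction_zero_ne_zero hq hχ ?_
  refine (hasDerivAt_LFunction_zero hχ.to_fun (MulChar.map_zero χ)).deriv.trans ?_
  simp [h]

end NonVanishing

/-! ### Relations between logarithms of cyclotomic numbers -/

section Relations

open Polynomial

variable {q : ℕ} [NeZero q]

lemma isPrimitiveRoot_stdAddChar_one : IsPrimitiveRoot (ZMod.stdAddChar (1 : ZMod q)) q := by
  have h := ZMod.stdAddChar_coe (N := q) 1
  rw [Int.cast_one, Int.cast_one, mul_one] at h
  exact h ▸ Complex.isPrimitiveRoot_exp q (NeZero.ne q)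

lemma stdAddChar_pow_val (a b : ZMod q) :
    ZMod.stdAddChar a ^ b.val = ZMod.stdAddChar (a * b) := by
  rw [← AddChar.map_nsmul_eq_pow, nsmul_eq_mul, ZMod.natCast_zmod_val, mul_comm]

lemma isAlgebraic_stdAddChar (a : ZMod q) : IsAlgebraic ℚ (ZMod.stdAddChar a) := by
  rw [← one_mul a, ← stdAddChar_pow_val]
  exact ((isPrimitiveRoot_stdAddChar_one.isIntegral (NeZero.pos q)).tower_top.isAlgebraic).pow _

lemma aeval_stdAddChar_eq_zero {P : ℤ[X]} (hP : aeval (ZMod.stdAddChar (1 : ZMod q)) P = 0)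
    (b : (ZMod q)ˣ) : aeval (ZMod.stdAddChar (b : ZMod q)) P = 0 := by
  have hζ := isPrimitiveRoot_stdAddChar_one (q := q)
  have hdvd := minpoly.isIntegrallyClosed_dvd (hζ.isIntegral (NeZero.pos q)) hP
  rw [hζ.minpoly_eq_pow_coprime (ZMod.val_coe_unit_coprime b), stdAddChar_pow_val,
    one_mul] at hdvd
  exact aeval_eq_zero_of_dvd_aeval_eq_zero hdvd (minpoly.aeval ℤ _)

lemma one_sub_stdAddChar_mul_one_sub_stdAddChar_neg {a : ZMod q} (ha : a ≠ 0) :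
    (1 - ZMod.stdAddChar a) * (1 - ZMod.stdAddChar (-a)) =
      Complex.exp (2 * logNormOneSub a) := by
  have hne : 1 - ZMod.stdAddChar a ≠ 0 := by
    rw [sub_ne_zero, ← AddChar.map_zero_eq_one (ZMod.stdAddChar (N := q))]
    exact ZMod.injective_stdAddChar.ne ha.symm
  have hconj : 1 - ZMod.stdAddChar (-a) = starRingEnd ℂ (1 - ZMod.stdAddChar a) := by
    rw [AddChar.map_neg_eq_conj, map_sub, map_one]
  rw [hconj, Complex.mul_conj, Complex.normSq_eq_norm_sq, logNormOneSub, two_mul,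
    Complex.exp_add, ← Complex.ofReal_exp, Real.exp_log (norm_pos_iff.2 hne), sq,
    Complex.ofReal_mul]

lemma isAlgebraic_exp_logNormOneSub {a : ZMod q} (ha : a ≠ 0) :
    IsAlgebraic ℚ (Complex.exp (logNormOneSub a)) := by
  refine IsAlgebraic.of_pow two_pos ?_
  rw [← Complex.exp_nat_mul, Nat.cast_two, ← one_sub_stdAddChar_mul_one_sub_stdAddChar_neg ha]
  exact (isAlgebraic_one.sub (isAlgebraic_stdAddChar a)).mul
    (isAlgebraic_one.sub (isAlgebraic_stdAddChar (-a)))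

/-- The polynomial `∏ₐ ((1 - Xᵃ)(1 - X⁻ᵃ))ᵏ⁽ᵃ⁾`, exponents of `X` being reduced modulo `q`; it is
real at roots of unity, so that its Galois conjugates are read off from absolute values. -/
noncomputable def oneSubPowProd (k : (ZMod q)ˣ → ℕ) : ℤ[X] :=
  ∏ a : (ZMod q)ˣ, ((1 - X ^ (a : ZMod q).val) * (1 - X ^ (-(a : ZMod q)).val)) ^ k a

lemma aeval_oneSubPowProd [Fact (1 < q)] (k : (ZMod q)ˣ → ℕ) (b : (ZMod q)ˣ) :
    aeval (ZMod.stdAddChar (b : ZMod q)) (oneSubPowProd k) =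
      Complex.exp (2 * ∑ a : (ZMod q)ˣ, k a * logNormOneSub (b * a : ZMod q) : ℝ) := by
  have hterm : ∀ a : (ZMod q)ˣ, (1 - ZMod.stdAddChar (b * a : ZMod q)) *
      (1 - ZMod.stdAddChar (-(b * a) : ZMod q)) =
        Complex.exp (2 * logNormOneSub (b * a : ZMod q)) := fun a =>
    one_sub_stdAddChar_mul_one_sub_stdAddChar_neg (b * a).ne_zero
  simp only [oneSubPowProd, map_prod, map_pow, map_mul, map_sub, map_one, aeval_X,
    stdAddChar_pow_val, mul_neg, hterm, ← Complex.exp_nat_mul, ← Complex.exp_sum]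
  push_cast
  rw [Finset.mul_sum]
  exact congrArg _ (Finset.sum_congr rfl fun a _ => by ring)

lemma sum_int_mul_logNormOneSub_mul_eq_zero [Fact (1 < q)] {g : (ZMod q)ˣ → ℤ}
    (hg : ∑ a : (ZMod q)ˣ, g a * logNormOneSub (a : ZMod q) = 0) (b : (ZMod q)ˣ) :
    ∑ a : (ZMod q)ˣ, g a * logNormOneSub (b * a : ZMod q) = 0 := by
  let pos : (ZMod q)ˣ → ℕ := fun a => (g a).toNat
  let neg : (ZMod q)ˣ → ℕ := fun a => (-g a).toNat
  have hsplit : ∀ a, (g a : ℝ) = pos a - neg a := fun a => by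
    exact_mod_cast (Int.toNat_sub_toNat_neg (g a)).symm
  simp only [hsplit, sub_mul, Finset.sum_sub_distrib, sub_eq_zero] at hg ⊢
  have hone : aeval (ZMod.stdAddChar (1 : ZMod q)) (oneSubPowProd pos - oneSubPowProd neg) = 0 := by
    have h := aeval_oneSubPowProd (q := q) (b := 1)
    simp only [Units.val_one, one_mul] at h
    rw [map_sub, h, h, hg, sub_self]
  have hb := aeval_stdAddChar_eq_zero hone b
  rw [map_sub, aeval_oneSubPowProd, aeval_oneSubPowProd, sub_eq_zero, ← Complex.ofReal_exp,
    ← Complex.ofReal_exp, Complex.ofReal_inj, Real.exp_eq_exp] at hb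
  exact mul_left_cancel₀ two_ne_zero hb

lemma sum_rat_mul_logNormOneSub_mul_eq_zero [Fact (1 < q)] {g : (ZMod q)ˣ → ℚ}
    (hg : ∑ a : (ZMod q)ˣ, g a * logNormOneSub (a : ZMod q) = 0) (b : (ZMod q)ˣ) :
    ∑ a : (ZMod q)ˣ, g a * logNormOneSub (b * a : ZMod q) = 0 := by
  obtain ⟨N, hN⟩ := IsLocalization.exist_integer_multiples_of_finite (nonZeroDivisors ℤ) g
  choose h hh using hN
  have hcast : ∀ a, (h a : ℝ) = N * g a := fun a => by
    have := hh a
    simp only [eq_intCast, Algebra.smul_def] at this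
    exact_mod_cast this
  have hN0 : ((N : ℤ) : ℝ) ≠ 0 := by exact_mod_cast nonZeroDivisors.ne_zero N.2
  have hsum := sum_int_mul_logNormOneSub_mul_eq_zero (g := h)
    (by simp only [hcast, mul_assoc, ← Finset.mul_sum, hg, mul_zero]) b
  simp only [hcast, mul_assoc, ← Finset.mul_sum] at hsum
  exact (mul_eq_zero.1 hsum).resolve_left hN0

end Relations

section Characters

variable {q : ℕ} [NeZero q]

lemma sum_zmod_eq_sum_units {M : Type*} [AddCommMonoid M] {F : ZMod q → M}
    (hF : ∀ j, ¬IsUnit j → F j = 0) : ∑ j, F j = ∑ u : (ZMod q)ˣ, F u :=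
  (Fintype.sum_of_injective (fun u : (ZMod q)ˣ => (u : ZMod q)) Units.val_injective _ _
    (fun j hj => hF j fun ⟨u, hu⟩ => hj ⟨u, hu⟩) fun _ => rfl).symm

lemma eq_zero_of_forall_sum_mul_char_eq_zero {G : (ZMod q)ˣ → ℂ}
    (hG : ∀ χ : DirichletCharacter ℂ q, ∑ a, G a * χ a = 0) (b : (ZMod q)ˣ) : G b = 0 := by
  have hsum : ∑ a, G a * ∑ χ : DirichletCharacter ℂ q, χ (b : ZMod q)⁻¹ * χ a = 0 :=
    calc ∑ a, G a * ∑ χ : DirichletCharacter ℂ q, χ (b : ZMod q)⁻¹ * χ a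
      _ = ∑ χ : DirichletCharacter ℂ q, χ (b : ZMod q)⁻¹ * ∑ a, G a * χ a := by
          simp only [Finset.mul_sum, mul_left_comm]
          exact Finset.sum_comm
      _ = 0 := by simp [hG]
  simp only [DirichletCharacter.sum_char_inv_mul_char_eq ℂ b.isUnit, Units.val_inj, mul_ite,
    mul_zero, Finset.sum_ite_eq, Finset.mem_univ, if_true] at hsum
  exact (mul_eq_zero.1 hsum).resolve_right
    (mod_cast (Nat.totient_pos.2 (NeZero.pos q)).ne')

lemma eq_zero_of_forall_even_sum_mul_char_eq_zero {G : (ZMod q)ˣ → ℂ} (heven : ∀ a, G (-a) = G a)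
    (hG : ∀ χ : DirichletCharacter ℂ q, χ.Even → ∑ a, G a * χ a = 0) (b : (ZMod q)ˣ) :
    G b = 0 := by
  refine eq_zero_of_forall_sum_mul_char_eq_zero (fun χ => ?_) b
  rcases χ.even_or_odd with hχ | hχ
  · exact hG χ hχ
  · have hneg : ∑ a, G a * χ a = -∑ a, G a * χ a := by
      rw [← Finset.sum_neg_distrib, ← Equiv.sum_comp (Equiv.neg (ZMod q)ˣ)]
      simp [heven, hχ.eval_neg]
    exact self_eq_neg.1 hneg

lemma sum_mul_char_mul_sum_inv_char_mul (χ : DirichletCharacter ℂ q) (g l : (ZMod q)ˣ → ℂ) :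
    (∑ a, g a * χ a) * ∑ u : (ZMod q)ˣ, χ⁻¹ u * l u =
      ∑ b : (ZMod q)ˣ, χ⁻¹ b * ∑ a, g a * l (b * a) := by
  have hterm : ∀ a : (ZMod q)ˣ, g a * χ a * ∑ u : (ZMod q)ˣ, χ⁻¹ u * l u =
      ∑ b : (ZMod q)ˣ, χ⁻¹ b * (g a * l (b * a)) := fun a => by
    have hcancel : χ a * χ⁻¹ a = 1 := by
      rw [MulChar.inv_apply_eq_inv', mul_inv_cancel₀ (a.isUnit.map χ).ne_zero]
    rw [← Equiv.sum_comp (Equiv.mulRight a), Finset.mul_sum]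
    refine Finset.sum_congr rfl fun b _ => ?_
    simp only [Equiv.coe_mulRight, Units.val_mul, map_mul]
    linear_combination (g a * χ⁻¹ b * l (b * a)) * hcancel
  rw [Finset.sum_mul, Finset.sum_congr rfl fun a _ => hterm a, Finset.sum_comm]
  simp only [Finset.mul_sum]

/- All rational relations between the `log ‖1 - ζᵃ‖` come from `‖1 - ζ⁻ᵃ‖ = ‖1 - ζᵃ‖`: a relation
is stable under Galois conjugation, so its Fourier transform is annihilated by the numbers
`L'(0, χ)`, which do not vanish for even `χ`. -/
lemma add_apply_neg_eq_zero_of_sum_mul_logNormOneSub_eq_zero (hq : IsPrimePow q)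
    {g : (ZMod q)ˣ → ℚ} (hg : ∑ a : (ZMod q)ˣ, g a * logNormOneSub (a : ZMod q) = 0)
    (b : (ZMod q)ˣ) : g b + g (-b) = 0 := by
  have : Fact (1 < q) := ⟨hq.one_lt⟩
  have hchar : ∀ χ : DirichletCharacter ℂ q, χ.Even → ∑ a : (ZMod q)ˣ, (g a : ℂ) * χ a = 0 := by
    intro χ hχ
    have hinv : χ⁻¹.Even := by
      rw [DirichletCharacter.Even, MulChar.inv_apply_eq_inv', hχ, inv_one]
    have hne := sum_mul_logNormOneSub_ne_zero hq hinv
    rw [sum_zmod_eq_sum_units fun j hj => by rw [MulChar.map_nonunit _ hj, zero_mul]] at hne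
    refine (mul_eq_zero.1 ?_).resolve_right hne
    rw [sum_mul_char_mul_sum_inv_char_mul χ _ fun u => (logNormOneSub (u : ZMod q) : ℂ)]
    refine Finset.sum_eq_zero fun b _ => mul_eq_zero_of_right _ ?_
    exact_mod_cast sum_rat_mul_logNormOneSub_mul_eq_zero hg b
  have hzero := eq_zero_of_forall_even_sum_mul_char_eq_zero (G := fun a => (g a : ℂ) + g (-a))
    (fun a => by rw [neg_neg, add_comm]) (fun χ hχ => ?_) b
  · exact_mod_cast hzero
  · have hneg : ∑ a : (ZMod q)ˣ, (g (-a) : ℂ) * χ a = ∑ a : (ZMod q)ˣ, (g a : ℂ) * χ a := by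
      rw [← Equiv.sum_comp (Equiv.neg (ZMod q)ˣ)]
      simp [hχ.eval_neg]
    simp only [add_mul, Finset.sum_add_distrib, hneg, hchar χ hχ, add_zero]

lemma exists_linearMap_logNormOneSub_eq (hq : IsPrimePow q) (b : (ZMod q)ˣ) :
    ∃ φ : ℂ →ₗ[ℚ] ℚ, ∀ a : (ZMod q)ˣ, φ (logNormOneSub (a : ZMod q)) =
      (if a = b then 1 else 0) + if a = -b then 1 else 0 := by
  let T : ((ZMod q)ˣ → ℚ) →ₗ[ℚ] ℂ :=
    Fintype.linearCombination ℚ fun a : (ZMod q)ˣ => (logNormOneSub (a : ZMod q) : ℂ)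
  let δ : ((ZMod q)ˣ → ℚ) →ₗ[ℚ] ℚ := .proj b + .proj (-b)
  have hδ : δ ∈ T.ker.dualAnnihilator := by
    refine (Submodule.mem_dualAnnihilator _).2 fun g hg => ?_
    refine add_apply_neg_eq_zero_of_sum_mul_logNormOneSub_eq_zero hq ?_ b
    have hTg : T g = 0 := hg
    simp only [T, Fintype.linearCombination_apply, Rat.smul_def] at hTg
    exact_mod_cast hTg
  rw [← LinearMap.range_dualMap_eq_dualAnnihilator_ker] at hδ
  obtain ⟨φ, hφ⟩ := hδ
  refine ⟨φ, fun a => ?_⟩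
  have h := LinearMap.congr_fun hφ (Pi.single a 1)
  simpa [T, δ, Pi.single_apply, eq_comm] using h

/- Baker's theorem upgrades the coordinate functional of the previous lemma to a `ℚ̄`-linear one. -/
lemma eq_zero_of_sum_mul_logNormOneSub_eq_zero (hq : IsPrimePow q) {F : (ZMod q)ˣ → ℂ}
    (heven : ∀ a, F (-a) = F a) (halg : ∀ a, IsAlgebraic ℚ (F a))
    (hF : ∑ a : (ZMod q)ˣ, F a * logNormOneSub (a : ZMod q) = 0) (b : (ZMod q)ˣ) : F b = 0 := by
  have : Fact (1 < q) := ⟨hq.one_lt⟩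
  obtain ⟨φ, hφ⟩ := exists_linearMap_logNormOneSub_eq hq b
  obtain ⟨Φ, hΦ⟩ := exists_linearMap_algebraicClosure_eq φ
  let G : (ZMod q)ˣ → algebraicClosure ℚ ℂ := fun a => ⟨F a, mem_algebraicClosure_iff.2 (halg a)⟩
  have hG : G (-b) = G b := Subtype.ext (heven b)
  have hΦF : Φ (∑ a : (ZMod q)ˣ, G a • (logNormOneSub (a : ZMod q) : ℂ)) = 0 := by
    rw [← map_zero Φ, ← hF]
    rfl
  have hΦl : ∀ a : (ZMod q)ˣ, Φ (logNormOneSub (a : ZMod q)) =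
      (if a = b then 1 else 0) + if a = -b then 1 else 0 := fun a => by
    rw [hΦ _ (isAlgebraic_exp_logNormOneSub a.ne_zero), hφ]
    simp only [map_add, apply_ite (algebraMap ℚ (algebraicClosure ℚ ℂ)), map_one, map_zero]
  have hsum : G b + G (-b) = 0 := by
    simpa [hΦl, mul_add, Finset.sum_add_distrib] using hΦF
  rw [hG, add_self_eq_zero] at hsum
  exact congrArg Subtype.val hsum

end Characters

lemma Lderiv0_intCast_eq_zero_iff {q : ℕ} [NeZero q] (hq : IsPrimePow q) {Φ : ZMod q → ℂ}
    (heven : Function.Even Φ) (hunit : ∀ j, ¬IsUnit j → Φ j = 0)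
    (halg : ∀ j, IsAlgebraic ℚ (Φ j)) : Lderiv0 q (fun m => Φ m) = 0 ↔ Φ = 0 := by
  have : Fact (1 < q) := ⟨hq.one_lt⟩
  rw [Lderiv0_intCast heven (hunit 0 not_isUnit_zero),
    sum_zmod_eq_sum_units fun j hj => by rw [hunit j hj, zero_mul]]
  refine ⟨fun h => funext fun j => ?_, fun h => by simp [h]⟩
  by_cases hj : IsUnit j
  · obtain ⟨u, rfl⟩ := hj
    exact eq_zero_of_sum_mul_logNormOneSub_eq_zero hq (fun a => by simpa using heven a)
      (fun a => halg a) (by simpa using h) u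
  · exact hunit j hj

lemma Lderiv0_eq_zero_iff {q : ℕ} (hq : IsPrimePow q) {f : ℤ → ℂ}
    (hper : ∀ m : ℤ, f (m + q) = f m) (heven : ∀ m : ℤ, f (-m) = f m)
    (hdir : ∀ m : ℤ, Int.gcd m q ≠ 1 → f m = 0) (halg : ∀ m : ℤ, IsAlgebraic ℚ (f m)) :
    Lderiv0 q f = 0 ↔ ∀ m : ℤ, f m = 0 := by
  have : NeZero q := ⟨hq.ne_zero⟩
  let Φ : ZMod q → ℂ := fun j => f (j.val : ℤ)
  have hf : ∀ m : ℤ, Φ m = f m := apply_val_intCast_of_periodic hper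
  have hunit : ∀ j, ¬IsUnit j → Φ j = 0 := fun j hj => hdir _ fun h => hj <| by
    rwa [Int.gcd_natCast_natCast, ← Nat.coprime_iff_gcd_eq_one, ← ZMod.isUnit_iff_coprime,
      ZMod.natCast_zmod_val] at h
  have hΦ : Function.Even Φ := fun j => by
    rw [← ZMod.natCast_zmod_val j, ← Int.cast_natCast, ← Int.cast_neg, hf, hf, heven]
  rw [← funext hf, Lderiv0_intCast_eq_zero_iff hq hΦ hunit fun j => halg _]
  exact ⟨fun h m => congrFun h m, fun h => funext fun j => by simpa using h (j.val : ℤ)⟩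

/-- For a prime power `q > 1` and even, algebraic-valued, Dirichlet-type periodic functions
`f₁, …, f_n` with period `q`, the numbers `L'(0,f₁), …, L'(0,f_n)` are linearly independent
over the field of algebraic numbers iff the functions `f₁, …, f_n` are. -/
theorem stmt11 (q : ℕ) (hq1 : 1 < q) (hq : IsPrimePow q) (n : ℕ) (f : Fin n → ℤ → ℂ)
    (hper : ∀ i, ∀ m : ℤ, f i (m + q) = f i m)
    (heven : ∀ i, ∀ m : ℤ, f i (-m) = f i m)
    (hdir : ∀ i, ∀ m : ℤ, Int.gcd m q ≠ 1 → f i m = 0)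
    (halg : ∀ i, ∀ m : ℤ, IsAlgebraic ℚ (f i m)) :
    (∀ c : Fin n → ℂ, (∀ i, IsAlgebraic ℚ (c i)) →
        ∑ i, c i * Lderiv0 q (f i) = 0 → ∀ i, c i = 0) ↔
      (∀ c : Fin n → ℂ, (∀ i, IsAlgebraic ℚ (c i)) →
        (∀ m : ℤ, ∑ i, c i * f i m = 0) → ∀ i, c i = 0) := by
  have : NeZero q := ⟨hq.ne_zero⟩
  refine forall_congr' fun c => forall_congr' fun hc => ?_
  rw [← Lderiv0_sum_mul c f, Lderiv0_eq_zero_iff hq]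
  · exact fun m => by simp only [hper]
  · exact fun m => by simp only [heven]
  · exact fun m hm => by simp only [hdir _ m hm, mul_zero, Finset.sum_const_zero]
  · exact fun m => (IsIntegral.sum _ fun i _ => ((hc i).mul (halg i m)).isIntegral).isAlgebraic
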